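/- arXiv:2209.09312 — 7 statements merged into one kernel-verified Lean document; each statement's English description precedes it below -/
import Mathlib

section
/- Let P be a finite ordered set, 𝒟 a dictated orbit structure for P, and U an interdependent 𝒟-orbit union. Then: (1) for all x ∈ P ∖ U and every 𝒟-orbit C ⊆ U, if there is c ∈ C with c < x then c' < x for all c' ∈ C, and if there is c ∈ C with c > x then c' > x for all c' ∈ C; (2) for every Φ ∈ Aut_𝒟(P), the restriction Φ|_U belongs to Aut_{𝒟|U}(U); (3) for every Ψ ∈ Aut_{𝒟|U}(U), the map Ψ^P defined by Ψ^P(x) = Ψ(x) for x ∈ U and Ψ^P(x) = x for x ∈ P ∖ U is an automorphism of P. -/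
/-! Since `parts` is a partition, `Φ` lies in `Aut_𝒟(P)` iff every `x` shares its part with `Φ x`
(`memAutD_iff`); hence `Aut_𝒟(P)` is closed under composition and inverses, and the `𝒟`-orbits
partition `P`.

For (1), take a `𝒟`-orbit `C ⊆ U` and `x ∉ U`. The orbit of `x` is not directly interdependent
with `C`, as it would then lie in the same component. So once `x` is comparable to one point of
`C`, it is comparable to all of them, and always in the same direction: `c < x < c'` with
`c, c' ∈ C` is impossible because `C` lies in a part, which is an antichain. Part (2) holds because
`U` is a union of orbits. In (3), order relations inside `U` are preserved by `Ψ`, and those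
between `U` and its complement are preserved by (1), since `Ψ p` lies in the orbit of `p`. -/

/-- `lowSet α k` is the set of elements of rank `< k`:
`lowSet α 0 = ∅` and `lowSet α (k+1)` adds the minimal elements of the complement. -/
def lowSet (α : Type*) [PartialOrder α] : ℕ → Set α
  | 0 => ∅
  | k + 1 => lowSet α k ∪ {x | x ∉ lowSet α k ∧ ∀ y, y < x → y ∈ lowSet α k}

/-- `rankSet α k` is the set `R_k` of elements of rank `k`: the minimal elements
of the complement of the set of elements of rank `< k`. -/
def rankSet (α : Type*) [PartialOrder α] (k : ℕ) : Set α :=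
  {x | x ∉ lowSet α k ∧ ∀ y, y < x → y ∈ lowSet α k}

/-- `α(R_k)`: the number of distinct restrictions of automorphisms to `R_k`. -/
noncomputable def alphaRank (α : Type*) [PartialOrder α] (k : ℕ) : ℕ :=
  Set.ncard {g : ↥(rankSet α k) → α | ∃ Φ : α ≃o α, ∀ x : ↥(rankSet α k), g x = Φ x.1}

/-- The ordered set has width `w`: there is an antichain with `w` elements and
every antichain has at most `w` elements. -/
def HasWidthP (α : Type*) [PartialOrder α] (w : ℕ) : Prop :=
  (∃ s : Set α, IsAntichain (· ≤ ·) s ∧ s.ncard = w) ∧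
    ∀ s : Set α, IsAntichain (· ≤ ·) s → s.ncard ≤ w

/-- Coconnected: no partition `P = B ∪ T` with nonempty `B`, `T` and `B < T`. -/
def CoconnectedP (α : Type*) [PartialOrder α] : Prop :=
  ¬ ∃ B T : Set α, B.Nonempty ∧ T.Nonempty ∧ Disjoint B T ∧ B ∪ T = Set.univ ∧
    ∀ b ∈ B, ∀ t ∈ T, b < t

/-- No element is fixed by all automorphisms. -/
def NoCommonFixedPoint (α : Type*) [PartialOrder α] : Prop :=
  ¬ ∃ p : α, ∀ Φ : α ≃o α, Φ p = p

/-- Max-locked (the basic width `≥ 3` definition). -/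
def MaxLockedBase (α : Type*) [PartialOrder α] : Prop :=
  CoconnectedP α ∧ NoCommonFixedPoint α ∧
    ((∃ w, HasWidthP α w ∧ 3 ≤ w ∧ w ≠ 4 ∧ ∃ k, Nat.factorial (w - 1) ≤ alphaRank α k) ∨
      (HasWidthP α 4 ∧ ∃ k, 8 < alphaRank α k))

/-- Max-locked, including the width-2 convention. -/
def MaxLockedFull (α : Type*) [PartialOrder α] : Prop :=
  MaxLockedBase α ∨ (CoconnectedP α ∧ HasWidthP α 2 ∧ Nat.card (α ≃o α) = 2)

/-- Order-autonomous set. -/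
def OrdAutonomous (α : Type*) [PartialOrder α] (S : Set α) : Prop :=
  S.Nonempty ∧ ∀ z ∉ S,
    ((∃ a ∈ S, z < a) → ∀ a ∈ S, z < a) ∧ ((∃ a ∈ S, a < z) → ∀ a ∈ S, a < z)

/-- `β` is order-isomorphic to the standard example `S_k`. -/
def IsoSW (β : Type*) [PartialOrder β] (k : ℕ) : Prop :=
  ∃ e : β ≃ Fin k × Bool, ∀ x y : β,
    x ≤ y ↔ (e x = e y ∨ ((e x).2 = false ∧ (e y).2 = true ∧ (e x).1 ≠ (e y).1))

/-- `β` is order-isomorphic to `kC_2`, a disjoint union of `k` two-element chains. -/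
def IsoKC2 (β : Type*) [PartialOrder β] (k : ℕ) : Prop :=
  ∃ e : β ≃ Fin k × Bool, ∀ x y : β,
    x ≤ y ↔ ((e x).1 = (e y).1 ∧ (e x).2 ≤ (e y).2)

/-- `β` is order-isomorphic to the 8-crown. -/
def IsoC8 (β : Type*) [PartialOrder β] : Prop :=
  ∃ e : β ≃ Fin 4 × Bool, ∀ x y : β,
    x ≤ y ↔ (e x = e y ∨ ((e x).2 = false ∧ (e y).2 = true ∧
      ((e y).1 = (e x).1 ∨ (e y).1 = (e x).1 + 1)))

/-- Membership in `Aut_𝒟(P)`: every orbit of the cyclic group generated by `Φ`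
is contained in some member of the partition `parts`. -/
def memAutD (α : Type*) [PartialOrder α] (parts : Set (Set α)) (Φ : α ≃o α) : Prop :=
  ∀ x : α, ∃ s ∈ parts, ∀ n : ℕ, (⇑Φ)^[n] x ∈ s

/-- The `𝒟`-orbit of a point. -/
def dOrbit (α : Type*) [PartialOrder α] (parts : Set (Set α)) (x : α) : Set α :=
  {y | ∃ Φ : α ≃o α, memAutD α parts Φ ∧ Φ x = y}

/-- The set of `𝒟`-orbits. -/
def dOrbits (α : Type*) [PartialOrder α] (parts : Set (Set α)) : Set (Set α) :=
  Set.range (dOrbit α parts)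

/-- Direct interdependence of two sets: a comparable pair of distinct points and an
incomparable pair. -/
def DirInterdep (α : Type*) [PartialOrder α] (C D : Set α) : Prop :=
  (∃ c ∈ C, ∃ d ∈ D, c ≠ d ∧ (c ≤ d ∨ d ≤ c)) ∧
    ∃ c ∈ C, ∃ d ∈ D, ¬ c ≤ d ∧ ¬ d ≤ c

/-- `U` is an interdependent `𝒟`-orbit union: the union of the vertices of a connected
component of the orbit graph. -/
def IsIOU (α : Type*) [PartialOrder α] (parts : Set (Set α)) (U : Set α) : Prop :=
  ∃ O ∈ dOrbits α parts, U = ⋃₀ {E | E ∈ dOrbits α parts ∧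
    Relation.ReflTransGen
      (fun C D => C ∈ dOrbits α parts ∧ D ∈ dOrbits α parts ∧ DirInterdep α C D) O E}

/-- The `Aut(P)`-orbit of a point. -/
def autOrbit (α : Type*) [PartialOrder α] (x : α) : Set α := {y | ∃ Φ : α ≃o α, Φ x = y}

/-- The natural orbit structure: the set of `Aut(P)`-orbits. -/
def natOrbits (α : Type*) [PartialOrder α] : Set (Set α) := Set.range (autOrbit α)

/-- `U` is an interdependent orbit union w.r.t. the natural orbit structure. -/
def IsNatIOU (α : Type*) [PartialOrder α] (U : Set α) : Prop :=
  ∃ O ∈ natOrbits α, U = ⋃₀ {E | E ∈ natOrbits α ∧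
    Relation.ReflTransGen
      (fun C D => C ∈ natOrbits α ∧ D ∈ natOrbits α ∧ DirInterdep α C D) O E}

/-- Membership in `Aut_{𝒩|U}(U)`: every orbit of the cyclic group generated by `Ψ`
is contained in some `Aut(P)`-orbit that lies inside `U`. -/
def memAutNatU (α : Type*) [PartialOrder α] (U : Set α) (Ψ : ↥U ≃o ↥U) : Prop :=
  ∀ p : ↥U, ∃ s ∈ natOrbits α, s ⊆ U ∧ ∀ n : ℕ, ((⇑Ψ)^[n] p : α) ∈ s

/-- Without slack: no member of the partition contains a nontrivial order-autonomous
antichain. -/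
def WithoutSlackP (α : Type*) [PartialOrder α] (parts : Set (Set α)) : Prop :=
  ∀ s ∈ parts, ¬ ∃ A : Set α, A ⊆ s ∧ OrdAutonomous α A ∧ IsAntichain (· ≤ ·) A ∧
    A.ncard ≠ 1 ∧ A.ncard ≠ Nat.card α

/-- Tight: without slack, and every member of the partition is a `𝒟`-orbit. -/
def TightP (α : Type*) [PartialOrder α] (parts : Set (Set α)) : Prop :=
  WithoutSlackP α parts ∧ ∀ s ∈ parts, s ∈ dOrbits α parts

/-- `w`-adequately bounded. -/
def AdequatelyBounded (α : Type*) [PartialOrder α] (parts : Set (Set α)) (w : ℕ) : Prop :=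
  ∃ (M : ℕ) (ws : Fin M → ℕ), (∀ j, ws j ≤ w - 1) ∧
    Set.ncard {Φ : α ≃o α | memAutD α parts Φ} ≤ ∏ j, Nat.factorial (ws j) ∧
    ∑ j, ws j ≤ (Nat.card α - Set.ncard parts) / 2

/-- Connectedness of the comparability graph. -/
def PosetConnectedP (α : Type*) [PartialOrder α] : Prop :=
  ∀ x y : α, Relation.ReflTransGen (fun a b : α => a ≤ b ∨ b ≤ a) x y

section OrbitStructure

variable {α : Type*} [PartialOrder α] {parts : Set (Set α)}

/-- For a partition, the condition on all iterates of `Φ` reduces to the first one. -/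
lemma memAutD_iff (hpart : Setoid.IsPartition parts) (Φ : α ≃o α) :
    memAutD α parts Φ ↔ ∀ x, ∃ s ∈ parts, x ∈ s ∧ Φ x ∈ s := by
  constructor
  · intro h x
    obtain ⟨s, hs, hn⟩ := h x
    exact ⟨s, hs, hn 0, hn 1⟩
  · intro h x
    obtain ⟨s, hs, hxs, -⟩ := h x
    refine ⟨s, hs, fun n => ?_⟩
    induction n with
    | zero => exact hxs
    | succ n ih =>
      rw [Function.iterate_succ_apply']
      obtain ⟨t, ht, h1, h2⟩ := h ((⇑Φ)^[n] x)
      rwa [(hpart.2 _).unique ⟨hs, ih⟩ ⟨ht, h1⟩]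

lemma memAutD_refl (hpart : Setoid.IsPartition parts) :
    memAutD α parts (OrderIso.refl α) := by
  rw [memAutD_iff hpart]
  intro x
  obtain ⟨s, ⟨hs, hx⟩, -⟩ := hpart.2 x
  exact ⟨s, hs, hx, hx⟩

lemma memAutD_symm (hpart : Setoid.IsPartition parts) {Φ : α ≃o α}
    (h : memAutD α parts Φ) : memAutD α parts Φ.symm := by
  rw [memAutD_iff hpart] at h ⊢
  intro x
  obtain ⟨s, hs, h1, h2⟩ := h (Φ.symm x)
  exact ⟨s, hs, by simpa using h2, h1⟩

lemma memAutD_trans (hpart : Setoid.IsPartition parts) {Φ Ψ : α ≃o α}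
    (hΦ : memAutD α parts Φ) (hΨ : memAutD α parts Ψ) : memAutD α parts (Φ.trans Ψ) := by
  rw [memAutD_iff hpart] at hΦ hΨ ⊢
  intro x
  obtain ⟨s, hs, h1, h2⟩ := hΦ x
  obtain ⟨t, ht, h3, h4⟩ := hΨ (Φ x)
  obtain rfl := (hpart.2 _).unique ⟨hs, h2⟩ ⟨ht, h3⟩
  exact ⟨s, hs, h1, h4⟩

lemma mem_dOrbit_self (hpart : Setoid.IsPartition parts) (x : α) : x ∈ dOrbit α parts x :=
  ⟨OrderIso.refl α, memAutD_refl hpart, rfl⟩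

lemma dOrbit_eq_of_mem (hpart : Setoid.IsPartition parts) {x y : α}
    (h : y ∈ dOrbit α parts x) : dOrbit α parts y = dOrbit α parts x := by
  obtain ⟨Φ, hΦ, rfl⟩ := h
  ext z
  constructor
  · rintro ⟨Ψ, hΨ, rfl⟩
    exact ⟨_, memAutD_trans hpart hΦ hΨ, rfl⟩
  · rintro ⟨Ψ, hΨ, rfl⟩
    exact ⟨_, memAutD_trans hpart (memAutD_symm hpart hΦ) hΨ, by simp⟩

lemma eq_dOrbit_of_mem (hpart : Setoid.IsPartition parts) {C : Set α}
    (hC : C ∈ dOrbits α parts) {x : α} (hx : x ∈ C) : C = dOrbit α parts x := by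
  obtain ⟨y, rfl⟩ := hC
  exact (dOrbit_eq_of_mem hpart hx).symm

lemma dOrbit_not_lt (hpart : Setoid.IsPartition parts)
    (hanti : ∀ s ∈ parts, IsAntichain (· ≤ ·) s) {C : Set α}
    (hC : C ∈ dOrbits α parts) {c d : α} (hc : c ∈ C) (hd : d ∈ C) : ¬ c < d := by
  rw [eq_dOrbit_of_mem hpart hC hc] at hd
  obtain ⟨Φ, hΦ, rfl⟩ := hd
  obtain ⟨s, hs, h1, h2⟩ := (memAutD_iff hpart Φ).1 hΦ c
  exact fun hlt => hanti s hs h1 h2 hlt.ne hlt.le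

lemma IsIOU.dOrbit_subset (hpart : Setoid.IsPartition parts) {U : Set α}
    (hU : IsIOU α parts U) {x : α} (hx : x ∈ U) : dOrbit α parts x ⊆ U := by
  obtain ⟨O, hO, rfl⟩ := hU
  obtain ⟨E, hE, hxE⟩ := hx
  rw [← eq_dOrbit_of_mem hpart hE.1 hxE]
  exact Set.subset_sUnion_of_mem hE

/-- A union of a component of the orbit graph absorbs every orbit directly interdependent with one
of its orbits. -/
lemma IsIOU.mem_of_dirInterdep (hpart : Setoid.IsPartition parts) {U : Set α}
    (hU : IsIOU α parts U) {x y : α} (hx : x ∈ U)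
    (h : DirInterdep α (dOrbit α parts x) (dOrbit α parts y)) : y ∈ U := by
  obtain ⟨O, hO, rfl⟩ := hU
  obtain ⟨E, ⟨hE, hOE⟩, hxE⟩ := hx
  rw [eq_dOrbit_of_mem hpart hE hxE] at hOE
  exact ⟨dOrbit α parts y, ⟨⟨y, rfl⟩, hOE.tail ⟨⟨x, rfl⟩, ⟨y, rfl⟩, h⟩⟩,
    mem_dOrbit_self hpart y⟩

/-- A point outside `U` comparable to one point of an orbit inside `U` is comparable to all. -/
lemma IsIOU.comparable (hpart : Setoid.IsPartition parts) {U : Set α}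
    (hU : IsIOU α parts U) {x : α} (hx : x ∉ U) {C : Set α} (hC : C ∈ dOrbits α parts)
    (hCU : C ⊆ U) {c c' : α} (hc : c ∈ C) (hc' : c' ∈ C) (hcx : c ≤ x ∨ x ≤ c) :
    c' < x ∨ x < c' := by
  have hne : ∀ d ∈ C, d ≠ x := fun d hd h => hx (h ▸ hCU hd)
  by_contra hcon
  rw [not_or] at hcon
  have hx' := mem_dOrbit_self hpart x
  refine hx (hU.mem_of_dirInterdep hpart (hCU hc) ?_)
  rw [← eq_dOrbit_of_mem hpart hC hc]
  exact ⟨⟨c, hc, x, hx', hne c hc, hcx⟩, ⟨c', hc', x, hx',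
    fun h => hcon.1 (h.lt_of_ne (hne c' hc')), fun h => hcon.2 (h.lt_of_ne (hne c' hc').symm)⟩⟩

lemma IsIOU.lt_of_lt (hpart : Setoid.IsPartition parts)
    (hanti : ∀ s ∈ parts, IsAntichain (· ≤ ·) s) {U : Set α}
    (hU : IsIOU α parts U) {x : α} (hx : x ∉ U) {C : Set α} (hC : C ∈ dOrbits α parts)
    (hCU : C ⊆ U) {c c' : α} (hc : c ∈ C) (hc' : c' ∈ C) (hcx : c < x) : c' < x :=
  (hU.comparable hpart hx hC hCU hc hc' (.inl hcx.le)).resolve_right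
    fun h => dOrbit_not_lt hpart hanti hC hc hc' (hcx.trans h)

lemma IsIOU.gt_of_gt (hpart : Setoid.IsPartition parts)
    (hanti : ∀ s ∈ parts, IsAntichain (· ≤ ·) s) {U : Set α}
    (hU : IsIOU α parts U) {x : α} (hx : x ∉ U) {C : Set α} (hC : C ∈ dOrbits α parts)
    (hCU : C ⊆ U) {c c' : α} (hc : c ∈ C) (hc' : c' ∈ C) (hcx : x < c) : x < c' :=
  (hU.comparable hpart hx hC hCU hc hc' (.inr hcx.le)).resolve_left
    fun h => dOrbit_not_lt hpart hanti hC hc' hc (h.trans hcx)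

end OrbitStructure

theorem stmt11 {α : Type*} [Fintype α] [PartialOrder α]
    (parts : Set (Set α)) (hpart : Setoid.IsPartition parts)
    (hanti : ∀ s ∈ parts, IsAntichain (· ≤ ·) s)
    (U : Set α) (hU : IsIOU α parts U) :
    (∀ x ∉ U, ∀ C ∈ dOrbits α parts, C ⊆ U →
      ((∃ c ∈ C, c < x) → ∀ c ∈ C, c < x) ∧ ((∃ c ∈ C, x < c) → ∀ c ∈ C, x < c)) ∧
    (∀ Φ : α ≃o α, memAutD α parts Φ → ∃ Ψ : ↥U ≃o ↥U,
      (∀ p : ↥U, (Ψ p : α) = Φ (p : α)) ∧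
      (∀ p : ↥U, ∃ s ∈ dOrbits α parts, s ⊆ U ∧ ∀ n : ℕ, ((⇑Ψ)^[n] p : α) ∈ s)) ∧
    (∀ Ψ : ↥U ≃o ↥U,
      (∀ p : ↥U, ∃ s ∈ dOrbits α parts, s ⊆ U ∧ ∀ n : ℕ, ((⇑Ψ)^[n] p : α) ∈ s) →
      ∃ Φ : α ≃o α, (∀ p : ↥U, Φ (p : α) = (Ψ p : α)) ∧ ∀ x ∉ U, Φ x = x) := by
  classical
  refine ⟨fun x hx C hC hCU => ⟨?_, ?_⟩, fun Φ hΦ => ?_, fun Ψ hΨ => ?_⟩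
  · rintro ⟨c, hc, hcx⟩ c' hc'
    exact hU.lt_of_lt hpart hanti hx hC hCU hc hc' hcx
  · rintro ⟨c, hc, hcx⟩ c' hc'
    exact hU.gt_of_gt hpart hanti hx hC hCU hc hc' hcx
  · have hmem : ∀ x, x ∈ U ↔ Φ x ∈ U := fun x =>
      ⟨fun h => hU.dOrbit_subset hpart h ⟨Φ, hΦ, rfl⟩,
        fun h => hU.dOrbit_subset hpart h ⟨Φ.symm, memAutD_symm hpart hΦ, by simp⟩⟩
    refine ⟨⟨Φ.toEquiv.subtypeEquiv hmem, fun {a b} => Φ.le_iff_le⟩, fun p => rfl, fun p =>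
      ⟨dOrbit α parts p, ⟨p, rfl⟩, hU.dOrbit_subset hpart p.2, fun n => ?_⟩⟩
    induction n with
    | zero => exact mem_dOrbit_self hpart _
    | succ n ih =>
      rw [Function.iterate_succ_apply', ← dOrbit_eq_of_mem hpart ih]
      exact ⟨Φ, hΦ, rfl⟩
  · have hin : ∀ p : ↥U, Equiv.Perm.ofSubtype Ψ.toEquiv (p : α) = (Ψ p : α) := fun p =>
      Equiv.Perm.ofSubtype_apply_coe _ p
    have hout : ∀ x ∉ U, Equiv.Perm.ofSubtype Ψ.toEquiv x = x := fun x hx =>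
      Equiv.Perm.ofSubtype_apply_of_not_mem _ hx
    refine ⟨⟨Equiv.Perm.ofSubtype Ψ.toEquiv, fun {a b} => ?_⟩, hin, hout⟩
    change Equiv.Perm.ofSubtype Ψ.toEquiv a ≤ Equiv.Perm.ofSubtype Ψ.toEquiv b ↔ a ≤ b
    -- In a mixed pair, non-strict and strict comparison agree, so (1) transfers the relation.
    have hne : ∀ p : ↥U, ∀ x ∉ U, (p : α) ≠ x := fun p x hx h => hx (h ▸ p.2)
    by_cases ha : a ∈ U <;> by_cases hb : b ∈ U
    · rw [hin ⟨a, ha⟩, hin ⟨b, hb⟩]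
      exact Ψ.le_iff_le (x := ⟨a, ha⟩) (y := ⟨b, hb⟩)
    · obtain ⟨s, hs, hsU, hn⟩ := hΨ ⟨a, ha⟩
      rw [hin ⟨a, ha⟩, hout b hb]
      exact ⟨fun h => (hU.lt_of_lt hpart hanti hb hs hsU (hn 1) (hn 0)
          (h.lt_of_ne (hne _ b hb))).le,
        fun h => (hU.lt_of_lt hpart hanti hb hs hsU (hn 0) (hn 1)
          (h.lt_of_ne (hne ⟨a, ha⟩ b hb))).le⟩
    · obtain ⟨s, hs, hsU, hn⟩ := hΨ ⟨b, hb⟩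
      rw [hin ⟨b, hb⟩, hout a ha]
      exact ⟨fun h => (hU.gt_of_gt hpart hanti ha hs hsU (hn 1) (hn 0)
          (h.lt_of_ne (hne _ a ha).symm)).le,
        fun h => (hU.gt_of_gt hpart hanti ha hs hsU (hn 0) (hn 1)
          (h.lt_of_ne (hne ⟨b, hb⟩ a ha).symm)).le⟩
    · rw [hout a ha, hout b hb]
end

section
/- Let P be a finite ordered set with natural orbit structure 𝒩, and let U_1,…,U_z be the non-singleton interdependent orbit unions of P. Then every automorphism Φ of P is the composition Φ = Φ_1 ∘ ⋯ ∘ Φ_z, where Φ_j agrees with Φ on U_j and is the identity on P ∖ U_j, each Φ_j is an automorphism of P whose restriction to U_j lies in Aut_{𝒩|U_j}(U_j), and conversely every such composition is an automorphism of P; consequently |Aut(P)| = ∏_{j=1}^z |Aut_{𝒩|U_j}(U_j)|. -/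
/-! ### Orbits and interdependent orbit unions -/

section Orbits

variable {α : Type*} [PartialOrder α]

theorem mem_autOrbit_self (x : α) : x ∈ autOrbit α x := ⟨OrderIso.refl α, rfl⟩

theorem autOrbit_eq_of_mem {x y : α} (h : y ∈ autOrbit α x) : autOrbit α y = autOrbit α x := by
  obtain ⟨Φ, rfl⟩ := h
  ext w
  constructor
  · rintro ⟨Ψ, rfl⟩
    exact ⟨Φ.trans Ψ, rfl⟩
  · rintro ⟨Ψ, rfl⟩
    exact ⟨Φ.symm.trans Ψ, by simp⟩

theorem DirInterdep.symm {C D : Set α} (h : DirInterdep α C D) : DirInterdep α D C := by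
  obtain ⟨⟨c, hc, d, hd, hne, hcd⟩, c', hc', d', hd', h1, h2⟩ := h
  exact ⟨⟨d, hd, c, hc, hne.symm, hcd.symm⟩, d', hd', c', hc', h2, h1⟩

/-- The interdependent orbit union containing `x`. -/
def iouOf (x : α) : Set α :=
  ⋃₀ {E | E ∈ natOrbits α ∧
    Relation.ReflTransGen
      (fun C D => C ∈ natOrbits α ∧ D ∈ natOrbits α ∧ DirInterdep α C D) (autOrbit α x) E}

theorem isNatIOU_iff {V : Set α} : IsNatIOU α V ↔ ∃ x, V = iouOf x := by
  constructor
  · rintro ⟨_, ⟨x, rfl⟩, h⟩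
    exact ⟨x, h⟩
  · rintro ⟨x, h⟩
    exact ⟨_, ⟨x, rfl⟩, h⟩

theorem mem_iouOf {x y : α} : y ∈ iouOf x ↔ Relation.ReflTransGen
    (fun C D => C ∈ natOrbits α ∧ D ∈ natOrbits α ∧ DirInterdep α C D)
    (autOrbit α x) (autOrbit α y) := by
  constructor
  · rintro ⟨_, ⟨⟨w, rfl⟩, h⟩, hy⟩
    rwa [autOrbit_eq_of_mem hy]
  · intro h
    exact ⟨_, ⟨⟨y, rfl⟩, h⟩, mem_autOrbit_self y⟩

theorem mem_iouOf_self (x : α) : x ∈ iouOf x := mem_iouOf.2 .refl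

theorem mem_iouOf_symm {x y : α} (h : y ∈ iouOf x) : x ∈ iouOf y := by
  rw [mem_iouOf] at h ⊢
  generalize autOrbit α y = D at h ⊢
  induction h with
  | refl => exact .refl
  | tail _ h ih => exact .head ⟨h.2.1, h.1, h.2.2.symm⟩ ih

theorem mem_iouOf_trans {x y w : α} (h : y ∈ iouOf x) (h' : w ∈ iouOf y) : w ∈ iouOf x := by
  rw [mem_iouOf] at *
  exact h.trans h'

theorem iouOf_eq_of_mem {x y : α} (h : y ∈ iouOf x) : iouOf y = iouOf x := by
  ext w
  exact ⟨mem_iouOf_trans h, mem_iouOf_trans (mem_iouOf_symm h)⟩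

theorem autOrbit_subset_iouOf (x : α) : autOrbit α x ⊆ iouOf x := by
  intro y hy
  rw [mem_iouOf, autOrbit_eq_of_mem hy]

theorem iouOf_eq_of_mem_autOrbit {x y : α} (h : y ∈ autOrbit α x) : iouOf y = iouOf x :=
  iouOf_eq_of_mem (autOrbit_subset_iouOf x h)

variable [Finite α]

/-- Orbits of a finite ordered set are antichains: `x ≤ Φ x` forces equality, since otherwise the
iterates of `Φ` would give an infinite strictly increasing sequence. -/
theorem eq_of_le_of_mem_autOrbit {x y : α} (h : y ∈ autOrbit α x) (hle : x ≤ y) : x = y := by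
  obtain ⟨Φ, rfl⟩ := h
  by_contra hne
  have hlt : x < Φ x := lt_of_le_of_ne hle hne
  have hmono : StrictMono fun n : ℕ => (⇑Φ)^[n] x := by
    refine strictMono_nat_of_lt_succ fun n => ?_
    rw [Function.iterate_succ_apply]
    exact Φ.strictMono.iterate n hlt
  exact not_injective_infinite_finite _ hmono.injective

theorem eq_of_le_of_autOrbit_eq {x y : α} (h : autOrbit α x = autOrbit α y) (hle : x ≤ y) :
    x = y :=
  eq_of_le_of_mem_autOrbit (h ▸ mem_autOrbit_self y) hle

/-- The order between points of different interdependent orbit unions depends only on their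
orbits. -/
theorem le_of_not_interdep {x y x' y' : α} (hne : iouOf x ≠ iouOf y)
    (hx : x' ∈ autOrbit α x) (hy : y' ∈ autOrbit α y) (hle : x ≤ y) : x' ≤ y' := by
  have hnd : ¬ DirInterdep α (autOrbit α x) (autOrbit α y) := fun h =>
    hne (iouOf_eq_of_mem (mem_iouOf.2 (.single ⟨⟨x, rfl⟩, ⟨y, rfl⟩, h⟩))).symm
  have hxy : x ≠ y := fun h => hne (by rw [h])
  have hcomp : ∀ c ∈ autOrbit α x, ∀ d ∈ autOrbit α y, c ≤ d ∨ d ≤ c := by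
    intro c hc d hd
    by_contra hcd
    rw [not_or] at hcd
    exact hnd ⟨⟨x, mem_autOrbit_self x, y, mem_autOrbit_self y, hxy, .inl hle⟩,
      c, hc, d, hd, hcd.1, hcd.2⟩
  have hx' := autOrbit_eq_of_mem hx
  have hy' := autOrbit_eq_of_mem hy
  -- If instead `y' ≤ x'`, comparing `x'` with `y` contradicts the antichain property either way.
  rcases hcomp x' hx y' hy with h | h
  · exact h
  · rcases hcomp x' hx y (mem_autOrbit_self y) with h2 | h2
    · rwa [eq_of_le_of_autOrbit_eq hy' (h.trans h2)]
    · have e := eq_of_le_of_autOrbit_eq hx'.symm (hle.trans h2)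
      exact absurd (le_antisymm hle (e ▸ h2)) hxy

/-- Gluing principle: an orbit-respecting self-map that preserves and reflects the order inside
each interdependent orbit union is an automorphism. -/
theorem exists_orderIso_of_iouOf (f : α → α) (hf : ∀ x, f x ∈ autOrbit α x)
    (hle : ∀ x y, iouOf x = iouOf y → (f x ≤ f y ↔ x ≤ y)) : ∃ Φ : α ≃o α, ⇑Φ = f := by
  have hmem : ∀ x, x ∈ autOrbit α (f x) := fun x =>
    autOrbit_eq_of_mem (hf x) ▸ mem_autOrbit_self x
  have hall : ∀ x y, f x ≤ f y ↔ x ≤ y := by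
    intro x y
    by_cases h : iouOf x = iouOf y
    · exact hle x y h
    · refine ⟨le_of_not_interdep ?_ (hmem x) (hmem y), le_of_not_interdep h (hf x) (hf y)⟩
      rwa [iouOf_eq_of_mem_autOrbit (hf x), iouOf_eq_of_mem_autOrbit (hf y)]
  have hinj : Function.Injective f := fun x y h =>
    le_antisymm ((hall x y).1 h.le) ((hall y x).1 h.ge)
  exact ⟨⟨Equiv.ofBijective f (Finite.injective_iff_bijective.1 hinj), hall _ _⟩, rfl⟩

end Orbits

/-! ### Restricting automorphisms to invariant sets -/

section Restriction

variable {α : Type*} [PartialOrder α]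

/-- The restriction of an automorphism of `α` to an invariant subset. -/
def restrictIso (Φ : α ≃o α) (V : Set α) (h : ∀ x, x ∈ V ↔ Φ x ∈ V) : ↥V ≃o ↥V where
  toEquiv := Φ.toEquiv.subtypeEquiv h
  map_rel_iff' := Φ.le_iff_le

theorem restrictIso_coe (Φ : α ≃o α) (V : Set α) (h : ∀ x, x ∈ V ↔ Φ x ∈ V) (p : ↥V) :
    (restrictIso Φ V h p : α) = Φ p := rfl

theorem memAutNatU_restrictIso (Φ : α ≃o α) (V : Set α) (h : ∀ x, x ∈ V ↔ Φ x ∈ V)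
    (hV : ∀ x ∈ V, autOrbit α x ⊆ V) : memAutNatU α V (restrictIso Φ V h) := by
  intro p
  refine ⟨_, ⟨p, rfl⟩, hV p p.2, fun n => ?_⟩
  induction n with
  | zero => exact mem_autOrbit_self _
  | succ n ih =>
    rw [Function.iterate_succ_apply', restrictIso_coe, ← autOrbit_eq_of_mem ih]
    exact ⟨Φ, rfl⟩

theorem memAutNatU.mem_autOrbit {V : Set α} {Ψ : ↥V ≃o ↥V} (h : memAutNatU α V Ψ) (p : ↥V) :
    (Ψ p : α) ∈ autOrbit α (p : α) := by
  obtain ⟨_, ⟨q, rfl⟩, -, hn⟩ := h p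
  have h0 : autOrbit α (p : α) = autOrbit α q := autOrbit_eq_of_mem (hn 0)
  rw [h0]
  exact hn 1

end Restriction

/-! ### Compositions of maps with disjoint supports -/

section Composition

variable {α : Type*}

theorem foldr_ofFn_of_forall_notMem (z : ℕ) (U : Fin z → Set α) (f : Fin z → α → α)
    (hfix : ∀ j, ∀ x ∉ U j, f j x = x) (x : α) (hx : ∀ j, x ∉ U j) :
    (List.ofFn f).foldr (· ∘ ·) id x = x := by
  induction z with
  | zero => simp
  | succ z ih =>
    rw [List.ofFn_succ, List.foldr_cons, Function.comp_apply,
      ih (fun j => U j.succ) (fun j => f j.succ) (fun j => hfix _) (fun j => hx _)]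
    exact hfix 0 x (hx 0)

/-- A composition of maps with pairwise disjoint invariant supports acts on each support as the
corresponding factor. -/
theorem foldr_ofFn_of_mem (z : ℕ) (U : Fin z → Set α) (f : Fin z → α → α)
    (hdisj : ∀ i j, ∀ x ∈ U i, x ∈ U j → i = j)
    (hfix : ∀ j, ∀ x ∉ U j, f j x = x) (hmap : ∀ j, ∀ x ∈ U j, f j x ∈ U j)
    (x : α) (j : Fin z) (hx : x ∈ U j) :
    (List.ofFn f).foldr (· ∘ ·) id x = f j x := by
  induction z with
  | zero => exact j.elim0
  | succ z ih =>
    rw [List.ofFn_succ, List.foldr_cons, Function.comp_apply]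
    cases j using Fin.cases with
    | zero =>
      rw [foldr_ofFn_of_forall_notMem z (fun j => U j.succ) (fun j => f j.succ)
        (fun j => hfix _)]
      exact fun i hi => (Fin.succ_ne_zero i) (hdisj _ _ x hi hx)
    | succ i =>
      rw [ih (fun j => U j.succ) (fun j => f j.succ)
        (fun a b x ha hb => Fin.succ_injective _ (hdisj _ _ x ha hb))
        (fun j => hfix _) (fun j => hmap _) i hx]
      exact hfix 0 _ fun h0 => (Fin.succ_ne_zero i) (hdisj _ _ _ (hmap _ x hx) h0)

theorem exists_orderIso_foldr [LE α] (l : List (α ≃o α)) :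
    ∃ Φ : α ≃o α, ⇑Φ = (l.map fun Ψ : α ≃o α => ⇑Ψ).foldr (· ∘ ·) id := by
  induction l with
  | nil => exact ⟨OrderIso.refl α, rfl⟩
  | cons a l ih =>
    obtain ⟨Φ, hΦ⟩ := ih
    exact ⟨Φ.trans a, by rw [List.map_cons, List.foldr_cons, ← hΦ]; rfl⟩

end Composition

theorem stmt12 {α : Type*} [Fintype α] [PartialOrder α]
    (z : ℕ) (U : Fin z → Set α) (hinj : Function.Injective U)
    (hU : ∀ V : Set α, (IsNatIOU α V ∧ 1 < V.ncard) ↔ ∃ j, U j = V) :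
    (∀ Φ : α ≃o α, ∃ Φs : Fin z → (α ≃o α),
      (∀ j, (∀ x ∈ U j, Φs j x = Φ x) ∧ (∀ x ∉ U j, Φs j x = x) ∧
        ∃ Ψ : ↥(U j) ≃o ↥(U j), (∀ p : ↥(U j), (Ψ p : α) = Φs j (p : α)) ∧
          memAutNatU α (U j) Ψ) ∧
      ⇑Φ = (List.ofFn fun j => ⇑(Φs j)).foldr (· ∘ ·) id) ∧
    (∀ Φs : Fin z → (α ≃o α),
      (∀ j, (∀ x ∉ U j, Φs j x = x) ∧
        ∃ Ψ : ↥(U j) ≃o ↥(U j), (∀ p : ↥(U j), (Ψ p : α) = Φs j (p : α)) ∧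
          memAutNatU α (U j) Ψ) →
      ∃ Φ : α ≃o α, ⇑Φ = (List.ofFn fun j => ⇑(Φs j)).foldr (· ∘ ·) id) ∧
    Nat.card (α ≃o α) =
      ∏ j, Set.ncard {Ψ : ↥(U j) ≃o ↥(U j) | memAutNatU α (U j) Ψ} := by
  classical
  have hUiou : ∀ j, ∀ x ∈ U j, U j = iouOf x := by
    intro j x hx
    obtain ⟨w, hw⟩ := isNatIOU_iff.1 ((hU (U j)).2 ⟨j, rfl⟩).1
    rw [hw] at hx ⊢
    exact (iouOf_eq_of_mem hx).symm
  have hdisj : ∀ i j, ∀ x ∈ U i, x ∈ U j → i = j := fun i j x hi hj =>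
    hinj ((hUiou i x hi).trans (hUiou j x hj).symm)
  have hsame : ∀ j x y, iouOf x = iouOf y → (x ∈ U j ↔ y ∈ U j) := by
    intro j x y h
    constructor
    · intro hx
      rw [hUiou j x hx, h]
      exact mem_iouOf_self y
    · intro hy
      rw [hUiou j y hy, ← h]
      exact mem_iouOf_self x
  have hinv : ∀ (Φ : α ≃o α) j x, x ∈ U j ↔ Φ x ∈ U j := fun Φ j x =>
    hsame j _ _ (iouOf_eq_of_mem_autOrbit ⟨Φ, rfl⟩).symm
  have hsub : ∀ j, ∀ x ∈ U j, autOrbit α x ⊆ U j := by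
    intro j x hx
    rw [hUiou j x hx]
    exact autOrbit_subset_iouOf x
  -- Points outside all `U j` form singleton unions, so every automorphism fixes them.
  have hfixed : ∀ (Φ : α ≃o α) x, (∀ j, x ∉ U j) → Φ x = x := by
    intro Φ x hx
    by_contra hne
    have hcard : 1 < (iouOf x).ncard :=
      (Set.one_lt_ncard_iff (Set.toFinite _)).2
        ⟨Φ x, x, autOrbit_subset_iouOf x ⟨Φ, rfl⟩, mem_iouOf_self x, hne⟩
    obtain ⟨j, hj⟩ := (hU (iouOf x)).1 ⟨isNatIOU_iff.2 ⟨x, rfl⟩, hcard⟩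
    exact hx j (hj ▸ mem_iouOf_self x)
  refine ⟨fun Φ => ?_, fun Φs _ => ?_, ?_⟩
  · have hex : ∀ j, ∃ Θ : α ≃o α, ⇑Θ = fun x => if x ∈ U j then Φ x else x := by
      intro j
      refine exists_orderIso_of_iouOf _ (fun x => ?_) (fun x y h => ?_)
      · by_cases hx : x ∈ U j
        · simp only [hx, if_true]
          exact ⟨Φ, rfl⟩
        · simp only [hx, if_false]
          exact mem_autOrbit_self x
      · by_cases hx : x ∈ U j
        · simp [hx, (hsame j x y h).1 hx]
        · have hy : y ∉ U j := fun hy => hx ((hsame j x y h).2 hy)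
          simp [hx, hy]
    choose Φs hΦs using hex
    have hin : ∀ j, ∀ x ∈ U j, Φs j x = Φ x := fun j x hx => by simp [hΦs, hx]
    have hout : ∀ j, ∀ x ∉ U j, Φs j x = x := fun j x hx => by simp [hΦs, hx]
    refine ⟨Φs, fun j => ⟨hin j, hout j, restrictIso (Φs j) (U j) (hinv _ j), fun p => rfl,
      memAutNatU_restrictIso _ _ _ (hsub j)⟩, ?_⟩
    funext x
    by_cases hx : ∃ j, x ∈ U j
    · obtain ⟨j, hj⟩ := hx
      rw [foldr_ofFn_of_mem z U (fun j => ⇑(Φs j)) hdisj hout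
        (fun j x hx => (hinv _ j x).1 hx) x j hj]
      exact (hin j x hj).symm
    · rw [not_exists] at hx
      rw [foldr_ofFn_of_forall_notMem z U (fun j => ⇑(Φs j)) hout x hx, hfixed Φ x hx]
  · obtain ⟨Φ, hΦ⟩ := exists_orderIso_foldr (List.ofFn Φs)
    refine ⟨Φ, ?_⟩
    rw [hΦ, List.map_ofFn]
    rfl
  · let F : (α ≃o α) → ∀ j, {Ψ : ↥(U j) ≃o ↥(U j) | memAutNatU α (U j) Ψ} := fun Φ j =>
      ⟨restrictIso Φ (U j) (hinv Φ j), memAutNatU_restrictIso _ _ _ (hsub j)⟩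
    have hF : Function.Bijective F := by
      constructor
      · intro Φ Φ' h
        ext x
        by_cases hx : ∃ j, x ∈ U j
        · obtain ⟨j, hj⟩ := hx
          have h1 := congrArg Subtype.val (congrFun h j)
          exact congrArg Subtype.val (DFunLike.congr_fun h1 (⟨x, hj⟩ : ↥(U j)))
        · rw [not_exists] at hx
          rw [hfixed Φ x hx, hfixed Φ' x hx]
      · intro g
        let f : α → α := fun x =>
          if h : ∃ j, x ∈ U j then ((g h.choose).1 ⟨x, h.choose_spec⟩ : α) else x
        have hfin : ∀ j (p : ↥(U j)), f p = (g j).1 p := by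
          rintro j ⟨x, hx⟩
          have h : ∃ j, x ∈ U j := ⟨j, hx⟩
          have key : ∀ i (hi : x ∈ U i), ((g i).1 ⟨x, hi⟩ : α) = (g j).1 ⟨x, hx⟩ := by
            intro i hi
            obtain rfl := hdisj i j x hi hx
            rfl
          simp only [f, dif_pos h]
          exact key _ _
        have hfout : ∀ x, (¬ ∃ j, x ∈ U j) → f x = x := fun x hx => dif_neg hx
        obtain ⟨Φ, hΦ⟩ : ∃ Φ : α ≃o α, ⇑Φ = f := by
          refine exists_orderIso_of_iouOf f (fun x => ?_) (fun x y h => ?_)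
          · by_cases hx : ∃ j, x ∈ U j
            · obtain ⟨j, hj⟩ := hx
              rw [hfin j ⟨x, hj⟩]
              exact memAutNatU.mem_autOrbit (g j).2 ⟨x, hj⟩
            · rw [hfout x hx]
              exact mem_autOrbit_self x
          · by_cases hx : ∃ j, x ∈ U j
            · obtain ⟨j, hj⟩ := hx
              have hy := (hsame j x y h).1 hj
              rw [hfin j ⟨x, hj⟩, hfin j ⟨y, hy⟩]
              exact (g j).1.le_iff_le (x := ⟨x, hj⟩) (y := ⟨y, hy⟩)
            · rw [hfout x hx, hfout y fun ⟨j, hj⟩ => hx ⟨j, (hsame j x y h).2 hj⟩]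
        refine ⟨Φ, ?_⟩
        funext j
        apply Subtype.ext
        ext p
        change Φ p = _
        rw [hΦ, hfin j p]
    rw [Nat.card_congr (Equiv.ofBijective F hF), Nat.card_pi]
    rfl
end

section
/- Let (P, 𝒟) be a tight structured ordered set and let C, D ∈ 𝒟 be such that there are c1 ∈ C, d1 ∈ D with c1 < d1 and there are c2 ∈ C, d2 ∈ D that are incomparable. Then gcd(|C|, |D|) > 1. -/
theorem image_eq_of_memAutD {α : Type*} [Finite α] [PartialOrder α] {parts : Set (Set α)}
    (hpart : Setoid.IsPartition parts) {D : Set α} (hD : D ∈ parts)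
    {Φ : α ≃o α} (hΦ : memAutD α parts Φ) : Φ '' D = D := by
  have hsub : Φ '' D ⊆ D := by
    rintro _ ⟨x, hx, rfl⟩
    obtain ⟨s, hs, hmem⟩ := hΦ x
    have hxs : x ∈ s := hmem 0
    have hsD : s = D := (hpart.2 x).unique ⟨hs, hxs⟩ ⟨hD, hx⟩
    exact hsD ▸ hmem 1
  exact Set.eq_of_subset_of_ncard_le hsub (Set.ncard_image_of_injective D Φ.injective).ge

/-- The relation `r` is kept general so that the lemma applies both to `<` and to `>`. -/
theorem exists_ncard_related_eq {α : Type*} [Finite α] [PartialOrder α] {parts : Set (Set α)}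
    (hpart : Setoid.IsPartition parts) {C D : Set α} (hC : C ∈ dOrbits α parts) (hD : D ∈ parts)
    (r : α → α → Prop) (hr : ∀ (Φ : α ≃o α) (a b : α), r (Φ a) (Φ b) ↔ r a b) :
    ∃ k : ℕ, ∀ c ∈ C, {d | d ∈ D ∧ r c d}.ncard = k := by
  obtain ⟨x, rfl⟩ := hC
  refine ⟨{d | d ∈ D ∧ r x d}.ncard, ?_⟩
  rintro _ ⟨Φ, hΦ, rfl⟩
  have himg : {d | d ∈ D ∧ r (Φ x) d} = Φ '' {d | d ∈ D ∧ r x d} := by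
    ext d
    constructor
    · rintro ⟨hd, hrd⟩
      rw [← image_eq_of_memAutD hpart hD hΦ] at hd
      obtain ⟨e, he, rfl⟩ := hd
      exact ⟨e, ⟨he, (hr Φ x e).1 hrd⟩, rfl⟩
    · rintro ⟨e, ⟨he, hre⟩, rfl⟩
      exact ⟨image_eq_of_memAutD hpart hD hΦ ▸ Set.mem_image_of_mem Φ he, (hr Φ x e).2 hre⟩
  rw [himg, Set.ncard_image_of_injective _ Φ.injective]

theorem stmt13 {α : Type*} [Fintype α] [PartialOrder α]
    (parts : Set (Set α)) (hpart : Setoid.IsPartition parts)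
    (hanti : ∀ s ∈ parts, IsAntichain (· ≤ ·) s)
    (htight : TightP α parts)
    (C D : Set α) (hC : C ∈ parts) (hD : D ∈ parts)
    (hlt : ∃ c ∈ C, ∃ d ∈ D, c < d)
    (hinc : ∃ c ∈ C, ∃ d ∈ D, ¬ c ≤ d ∧ ¬ d ≤ c) :
    1 < Nat.gcd C.ncard D.ncard := by
  classical
  obtain ⟨c₁, hc₁, d₁, hd₁, hlt₁⟩ := hlt
  obtain ⟨c₂, hc₂, d₂, hd₂, hnle, -⟩ := hinc
  obtain ⟨k, hk⟩ := exists_ncard_related_eq hpart (htight.2 C hC) hD (· < ·)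
    (fun Φ _ _ => Φ.lt_iff_lt)
  obtain ⟨l, hl⟩ := exists_ncard_related_eq hpart (htight.2 D hD) hC (fun a b => b < a)
    (fun Φ _ _ => Φ.lt_iff_lt)
  have hcount : C.ncard * k = D.ncard * l := by
    rw [Set.ncard_eq_toFinset_card', Set.ncard_eq_toFinset_card']
    refine Finset.card_mul_eq_card_mul (· < ·) (fun c hc => ?_) (fun d hd => ?_)
    · rw [← hk c (Set.mem_toFinset.1 hc), ← Set.ncard_coe_finset]
      congr 1
      ext d
      simp [Finset.bipartiteAbove]
    · rw [← hl d (Set.mem_toFinset.1 hd), ← Set.ncard_coe_finset]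
      congr 1
      ext c
      simp [Finset.bipartiteBelow]
  have hgcd_pos : 0 < Nat.gcd C.ncard D.ncard :=
    Nat.gcd_pos_of_pos_left _ ((Set.ncard_pos).2 ⟨c₁, hc₁⟩)
  by_contra hgcd
  have hcop : Nat.Coprime D.ncard C.ncard := by
    rw [Nat.coprime_comm, Nat.coprime_iff_gcd_eq_one]
    omega
  have hdvd : D.ncard ∣ k := hcop.dvd_of_dvd_mul_left ⟨l, hcount⟩
  have hk_pos : 0 < k := by
    rw [← hk c₁ hc₁]
    exact (Set.ncard_pos).2 ⟨d₁, hd₁, hlt₁⟩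
  have hall : {d | d ∈ D ∧ c₂ < d} = D :=
    Set.eq_of_subset_of_ncard_le (fun _ h => h.1) ((Nat.le_of_dvd hk_pos hdvd).trans (hk c₂ hc₂).ge)
  have hmem : d₂ ∈ {d | d ∈ D ∧ c₂ < d} := hall.symm ▸ hd₂
  exact hnle hmem.2.le
end

section
/- Let (U, {B, T}) be a flexible tight interdependent orbit union such that all elements of B are minimal in U and all elements of T are maximal in U. If U is not order-isomorphic to an 8-crown, then (U, {B, T}) is max{|B|, |T|}-adequately bounded. -/
/-! ### The bipartite configuration -/

/-- The situation of the theorem reduced to what the proof uses: a partition into minimal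
elements `B` and maximal elements `T`, each a single orbit of the automorphism group, whose
comparability relation is neither empty nor complete and in which no two points of `B`, and no
two points of `T`, are comparable to the same points. -/
structure TwoOrbit {α : Type*} [PartialOrder α] (B T : Set α) : Prop where
  cover : ∀ x, x ∈ B ∨ x ∈ T
  disj : ∀ x, x ∈ B → x ∉ T
  min : ∀ b ∈ B, IsMin b
  max : ∀ t ∈ T, IsMax t
  transB : ∀ x ∈ B, ∀ y ∈ B, ∃ Φ : α ≃o α, Φ x = y
  transT : ∀ x ∈ T, ∀ y ∈ T, ∃ Φ : α ≃o α, Φ x = y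
  edge : ∃ b ∈ B, ∃ t ∈ T, b < t
  nonedge : ∃ b ∈ B, ∃ t ∈ T, ¬ b < t
  twinB : ∀ x ∈ B, ∀ y ∈ B, (∀ t, x < t ↔ y < t) → x = y
  twinT : ∀ x ∈ T, ∀ y ∈ T, (∀ b, b < x ↔ b < y) → x = y

/-- Along a path of the orbit graph that starts in one part and ends outside it, some edge
joins an orbit inside `B` to an orbit inside `T`. -/
theorem exists_edge_nonedge {α : Type*} [PartialOrder α] (B T : Set α)
    (hcover : ∀ x, x ∈ B ∨ x ∈ T) (hdisj : ∀ x, x ∈ B → x ∉ T)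
    (hB : B.Nonempty) (hT : T.Nonempty)
    (hBmin : ∀ b ∈ B, IsMin b)
    (hIOU : IsIOU α ({B, T} : Set (Set α)) Set.univ) :
    (∃ b ∈ B, ∃ t ∈ T, b < t) ∧ ∃ b ∈ B, ∃ t ∈ T, ¬ b < t := by
  have horb : ∀ E ∈ dOrbits α ({B, T} : Set (Set α)), E ⊆ B ∨ E ⊆ T := by
    rintro _ ⟨x, rfl⟩
    have key : ∀ y ∈ dOrbit α ({B, T} : Set (Set α)) x, (x ∈ B ∧ y ∈ B) ∨ (x ∈ T ∧ y ∈ T) := by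
      rintro y ⟨Φ, hΦ, rfl⟩
      obtain ⟨s, hs, hn⟩ := hΦ x
      have h0 := hn 0
      have h1 := hn 1
      simp only [Function.iterate_zero, id, Function.iterate_one] at h0 h1
      rcases hs with rfl | rfl
      · exact Or.inl ⟨h0, h1⟩
      · exact Or.inr ⟨h0, h1⟩
    rcases hcover x with hx | hx
    · exact Or.inl fun y hy => by
        rcases key y hy with h | h
        · exact h.2
        · exact absurd h.1 (hdisj x hx)
    · exact Or.inr fun y hy => by
        rcases key y hy with h | h
        · exact absurd hx (hdisj x h.1)
        · exact h.2
  have hcross : ∀ C D : Set α, C ⊆ B → D ⊆ T → (DirInterdep α C D ∨ DirInterdep α D C) →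
      (∃ b ∈ B, ∃ t ∈ T, b < t) ∧ ∃ b ∈ B, ∃ t ∈ T, ¬ b < t := by
    have hlt : ∀ b ∈ B, ∀ t ∈ T, b ≠ t → (b ≤ t ∨ t ≤ b) → b < t := by
      intro b hb t _ hne h
      rcases h with h | h
      · exact lt_of_le_of_ne h hne
      · exact lt_of_le_of_ne (hBmin b hb h) hne
    rintro C D hC hD (⟨⟨c, hc, d, hd, hne, hcd⟩, c', hc', d', hd', h1, h2⟩ |
      ⟨⟨d, hd, c, hc, hne, hcd⟩, d', hd', c', hc', h1, h2⟩)
    · exact ⟨⟨c, hC hc, d, hD hd, hlt c (hC hc) d (hD hd) hne hcd⟩,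
        c', hC hc', d', hD hd', fun h => h1 h.le⟩
    · exact ⟨⟨c, hC hc, d, hD hd, hlt c (hC hc) d (hD hd) hne.symm hcd.symm⟩,
        c', hC hc', d', hD hd', fun h => h2 h.le⟩
  by_contra hcon
  obtain ⟨O, hO, hU⟩ := hIOU
  have hmem : ∀ x : α, ∃ E, Relation.ReflTransGen
      (fun C D => C ∈ dOrbits α ({B, T} : Set (Set α)) ∧ D ∈ dOrbits α ({B, T} : Set (Set α)) ∧
        DirInterdep α C D) O E ∧ x ∈ E := by
    intro x
    have hx : x ∈ (Set.univ : Set α) := trivial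
    rw [hU] at hx
    obtain ⟨E, hE, hxE⟩ := hx
    exact ⟨E, hE.2, hxE⟩
  rcases horb O hO with hOs | hOs
  · have hall : ∀ E, Relation.ReflTransGen (fun C D => C ∈ dOrbits α ({B, T} : Set (Set α)) ∧
        D ∈ dOrbits α ({B, T} : Set (Set α)) ∧ DirInterdep α C D) O E → E ⊆ B := by
      intro E hE
      induction hE with
      | refl => exact hOs
      | tail _ hst ih =>
        rcases horb _ hst.2.1 with h | h
        · exact h
        · exact absurd (hcross _ _ ih h (Or.inl hst.2.2)) hcon
    obtain ⟨t, ht⟩ := hT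
    obtain ⟨E, hE, htE⟩ := hmem t
    exact hdisj t (hall E hE htE) ht
  · have hall : ∀ E, Relation.ReflTransGen (fun C D => C ∈ dOrbits α ({B, T} : Set (Set α)) ∧
        D ∈ dOrbits α ({B, T} : Set (Set α)) ∧ DirInterdep α C D) O E → E ⊆ T := by
      intro E hE
      induction hE with
      | refl => exact hOs
      | tail _ hst ih =>
        rcases horb _ hst.2.1 with h | h
        · exact absurd (hcross _ _ h ih (Or.inr hst.2.2)) hcon
        · exact h
    obtain ⟨b, hb⟩ := hB
    obtain ⟨E, hE, hbE⟩ := hmem b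
    exact hdisj b hb (hall E hE hbE)

/-- Two points of one part that have the same strict lower and upper bounds form a nontrivial
order-autonomous antichain, so they coincide when there is no slack. -/
theorem eq_of_twins {α : Type*} [Finite α] [PartialOrder α] {parts : Set (Set α)}
    (hslack : WithoutSlackP α parts) {s : Set α} (hs : s ∈ parts)
    (hanti : IsAntichain (· ≤ ·) s) {z : α} (hz : z ∉ s) {x y : α} (hx : x ∈ s) (hy : y ∈ s)
    (hup : ∀ t, x < t ↔ y < t) (hdown : ∀ b, b < x ↔ b < y) : x = y := by
  by_contra hne
  have hsub : ({x, y} : Set α) ⊆ s := by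
    rintro u (rfl | rfl) <;> assumption
  refine hslack s hs ⟨{x, y}, hsub, ⟨⟨x, by simp⟩, ?_⟩, hanti.subset hsub, ?_, ?_⟩
  · intro w _
    have h1 := hup w
    have h2 := hdown w
    constructor
    · rintro ⟨a, rfl | rfl, ha⟩ c (rfl | rfl) <;> tauto
    · rintro ⟨a, rfl | rfl, ha⟩ c (rfl | rfl) <;> tauto
  · rw [Set.ncard_pair hne]; decide
  · intro hc
    have huniv : ({x, y} : Set α) = Set.univ :=
      Set.eq_of_subset_of_ncard_le (Set.subset_univ _) (by rw [Set.ncard_univ, hc])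
    exact hz (hsub (huniv ▸ Set.mem_univ z))

theorem twoOrbit_of_tight {α : Type*} [Finite α] [PartialOrder α] (B T : Set α)
    (hBT : B ≠ T)
    (hpart : Setoid.IsPartition ({B, T} : Set (Set α)))
    (hanti : ∀ s ∈ ({B, T} : Set (Set α)), IsAntichain (· ≤ ·) s)
    (hBmin : ∀ b ∈ B, IsMin b) (hTmax : ∀ t ∈ T, IsMax t)
    (hIOU : IsIOU α ({B, T} : Set (Set α)) Set.univ)
    (htight : TightP α ({B, T} : Set (Set α))) : TwoOrbit B T := by
  have hcover : ∀ x, x ∈ B ∨ x ∈ T := by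
    intro x
    obtain ⟨s, ⟨hs, hxs⟩, -⟩ := hpart.2 x
    rcases hs with rfl | rfl
    · exact Or.inl hxs
    · exact Or.inr hxs
  have hdisj : ∀ x, x ∈ B → x ∉ T := by
    intro x hxB hxT
    exact hBT ((hpart.2 x).unique ⟨by simp, hxB⟩ ⟨by simp, hxT⟩)
  have hB : B.Nonempty := Set.nonempty_iff_ne_empty.2 fun h => hpart.1 (by simp [h])
  have hT : T.Nonempty := Set.nonempty_iff_ne_empty.2 fun h => hpart.1 (by simp [h])
  have htrans : ∀ s ∈ ({B, T} : Set (Set α)), ∀ x ∈ s, ∀ y ∈ s, ∃ Φ : α ≃o α, Φ x = y := by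
    intro s hs x hx y hy
    obtain ⟨z, rfl⟩ := htight.2 s hs
    obtain ⟨Φ, -, rfl⟩ := hx
    obtain ⟨Ψ, -, rfl⟩ := hy
    exact ⟨Φ.symm.trans Ψ, by simp⟩
  obtain ⟨hedge, hnonedge⟩ := exists_edge_nonedge B T hcover hdisj hB hT hBmin hIOU
  refine ⟨hcover, hdisj, hBmin, hTmax, htrans B (by simp), htrans T (by simp), hedge, hnonedge,
    ?_, ?_⟩
  · intro x hx y hy h
    obtain ⟨z, hz⟩ := hT
    exact eq_of_twins htight.1 (by simp) (hanti B (by simp)) (fun hzB => hdisj z hzB hz) hx hy h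
      fun b => ⟨fun hb => absurd hb (hBmin x hx).not_lt, fun hb => absurd hb (hBmin y hy).not_lt⟩
  · intro x hx y hy h
    obtain ⟨z, hz⟩ := hB
    exact eq_of_twins htight.1 (by simp) (hanti T (by simp)) (hdisj z hz) hx hy
      (fun b => ⟨fun hb => absurd hb (hTmax x hx).not_lt, fun hb => absurd hb (hTmax y hy).not_lt⟩) h

/-! ### Double counting -/

theorem ncard_mul_le_of_rel {α : Type*} [Finite α] (r : α → α → Prop) (S T : Set α) (m n : ℕ)
    (hm : ∀ a ∈ S, m ≤ (T ∩ {b | r a b}).ncard)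
    (hn : ∀ b ∈ T, (S ∩ {a | r a b}).ncard ≤ n) : S.ncard * m ≤ T.ncard * n := by
  classical
  have := Fintype.ofFinite α
  rw [Set.ncard_eq_toFinset_card' S, Set.ncard_eq_toFinset_card' T]
  refine Finset.card_mul_le_card_mul r ?_ ?_
  · intro a ha
    have h := hm a (by simpa using ha)
    rw [Set.ncard_eq_toFinset_card'] at h
    refine h.trans (Finset.card_le_card ?_)
    intro b
    simp [Finset.bipartiteAbove]
  · intro b hb
    have h := hn b (by simpa using hb)
    rw [Set.ncard_eq_toFinset_card'] at h
    refine le_trans (Finset.card_le_card ?_) h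
    intro a
    simp [Finset.bipartiteBelow]

theorem finite_orderAut (α : Type*) [Finite α] [PartialOrder α] : Finite (α ≃o α) :=
  Finite.of_injective (fun Φ : α ≃o α => (Φ : α → α)) DFunLike.coe_injective

/-- A group of automorphisms acting faithfully on an invariant set `S` has at most `|S|!`
elements. -/
theorem card_aut_le_factorial {α : Type*} [Finite α] [PartialOrder α] (S : Set α)
    (hS : ∀ (Φ : α ≃o α) x, Φ x ∈ S ↔ x ∈ S)
    (hf : ∀ Φ Ψ : α ≃o α, (∀ x ∈ S, Φ x = Ψ x) → Φ = Ψ) :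
    Nat.card (α ≃o α) ≤ S.ncard.factorial := by
  rw [← Nat.card_coe_set_eq S, ← Nat.card_perm]
  refine Nat.card_le_card_of_injective
    (fun Φ : α ≃o α => (Φ.toEquiv.subtypeEquiv fun a => (hS Φ a).symm : Equiv.Perm S)) ?_
  intro Φ Ψ h
  refine hf Φ Ψ fun x hx => ?_
  have := congrArg (fun σ : Equiv.Perm S => (σ ⟨x, hx⟩ : α)) h
  simpa using this

namespace TwoOrbit

variable {α : Type*} [PartialOrder α] {B T : Set α}

theorem mem_T_iff (h : TwoOrbit B T) (x : α) : x ∈ T ↔ x ∉ B :=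
  ⟨fun hT hB => h.disj x hB hT, fun hB => (h.cover x).resolve_left hB⟩

theorem lt_mem (h : TwoOrbit B T) {x y : α} (hxy : x < y) : x ∈ B ∧ y ∈ T := by
  constructor
  · by_contra hx
    exact (h.max x ((h.mem_T_iff x).2 hx)).not_lt hxy
  · rw [h.mem_T_iff]
    exact fun hy => (h.min y hy).not_lt hxy

theorem exists_lt (h : TwoOrbit B T) {t : α} (ht : t ∈ T) : ∃ b, b < t := by
  obtain ⟨b, -, t', ht', hlt⟩ := h.edge
  obtain ⟨Φ, rfl⟩ := h.transT t' ht' t ht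
  exact ⟨Φ b, by simpa using hlt⟩

theorem exists_gt (h : TwoOrbit B T) {b : α} (hb : b ∈ B) : ∃ t, b < t := by
  obtain ⟨b', hb', t, -, hlt⟩ := h.edge
  obtain ⟨Φ, rfl⟩ := h.transB b' hb' b hb
  exact ⟨Φ t, by simpa using hlt⟩

theorem mem_B_iff_isMin (h : TwoOrbit B T) (x : α) : x ∈ B ↔ IsMin x := by
  refine ⟨h.min x, fun hx => ?_⟩
  by_contra hB
  obtain ⟨b, hb⟩ := h.exists_lt ((h.mem_T_iff x).2 hB)
  exact hx.not_lt hb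

theorem map_mem_B (h : TwoOrbit B T) (Φ : α ≃o α) (x : α) : Φ x ∈ B ↔ x ∈ B := by
  rw [h.mem_B_iff_isMin, h.mem_B_iff_isMin, OrderIso.isMin_apply]

theorem map_mem_T (h : TwoOrbit B T) (Φ : α ≃o α) (x : α) : Φ x ∈ T ↔ x ∈ T := by
  rw [h.mem_T_iff, h.mem_T_iff, h.map_mem_B]

/-- An automorphism is determined by its action on `B`: a point of `T` is determined by the
set of points below it. -/
theorem eq_of_eqOn_B (h : TwoOrbit B T) (Φ Ψ : α ≃o α) (hB : ∀ x ∈ B, Φ x = Ψ x) : Φ = Ψ := by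
  ext x
  rcases h.cover x with hx | hx
  · exact hB x hx
  · refine h.twinT _ ((h.map_mem_T Φ x).2 hx) _ ((h.map_mem_T Ψ x).2 hx) fun b => ?_
    by_cases hb : b ∈ B
    · obtain ⟨c, rfl⟩ := Φ.surjective b
      rw [h.map_mem_B] at hb
      conv_rhs => rw [hB c hb]
      simp
    · exact ⟨fun hl => absurd (h.lt_mem hl).1 hb, fun hl => absurd (h.lt_mem hl).1 hb⟩

theorem eq_of_eqOn_T (h : TwoOrbit B T) (Φ Ψ : α ≃o α) (hT : ∀ x ∈ T, Φ x = Ψ x) : Φ = Ψ := by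
  ext x
  rcases h.cover x with hx | hx
  · refine h.twinB _ ((h.map_mem_B Φ x).2 hx) _ ((h.map_mem_B Ψ x).2 hx) fun b => ?_
    by_cases hb : b ∈ T
    · obtain ⟨c, rfl⟩ := Φ.surjective b
      rw [h.map_mem_T] at hb
      conv_rhs => rw [hT c hb]
      simp
    · exact ⟨fun hl => absurd (h.lt_mem hl).2 hb, fun hl => absurd (h.lt_mem hl).2 hb⟩
  · exact hT x hx

theorem ncard_add [Finite α] (h : TwoOrbit B T) : Nat.card α = B.ncard + T.ncard := by
  have hT : T = Bᶜ := Set.ext h.mem_T_iff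
  rw [hT, Set.ncard_add_ncard_compl]

/-- The comparability relation is biregular, with degrees `d` on `B` and `e` on `T`; counting
comparable pairs in two ways relates the degrees to the sizes of the parts. -/
theorem exists_degrees [Finite α] (h : TwoOrbit B T) : ∃ d e : ℕ,
    (∀ b ∈ B, (Set.Ioi b).ncard = d) ∧ (∀ t ∈ T, (Set.Iio t).ncard = e) ∧
    0 < d ∧ d < T.ncard ∧ 0 < e ∧ e < B.ncard ∧ B.ncard * d = T.ncard * e := by
  obtain ⟨b, hb, t, ht, hbt⟩ := h.nonedge
  have hd : ∀ c ∈ B, (Set.Ioi c).ncard = (Set.Ioi b).ncard := by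
    intro c hc
    obtain ⟨Φ, rfl⟩ := h.transB b hb c hc
    rw [← Set.ncard_image_of_injective (Set.Ioi b) Φ.injective, OrderIso.image_Ioi]
  have he : ∀ c ∈ T, (Set.Iio c).ncard = (Set.Iio t).ncard := by
    intro c hc
    obtain ⟨Φ, rfl⟩ := h.transT t ht c hc
    rw [← Set.ncard_image_of_injective (Set.Iio t) Φ.injective, OrderIso.image_Iio]
  have hup : ∀ c, T ∩ {x | c < x} = Set.Ioi c := fun c =>
    Set.inter_eq_right.2 fun x hx => (h.lt_mem hx).2
  have hdown : ∀ c, B ∩ {x | x < c} = Set.Iio c := fun c =>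
    Set.inter_eq_right.2 fun x hx => (h.lt_mem hx).1
  refine ⟨_, _, hd, he, ?_, ?_, ?_, ?_, le_antisymm ?_ ?_⟩
  · exact (Set.ncard_pos).2 (h.exists_gt hb)
  · exact Set.ncard_lt_ncard ⟨fun x hx => (h.lt_mem hx).2, fun hs => hbt (hs ht)⟩
  · exact (Set.ncard_pos).2 (h.exists_lt ht)
  · exact Set.ncard_lt_ncard ⟨fun x hx => (h.lt_mem hx).1, fun hs => hbt (hs hb)⟩
  · refine ncard_mul_le_of_rel (· < ·) B T _ _ ?_ ?_
    · intro a ha; rw [hup, hd a ha]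
    · intro a ha; rw [hdown, he a ha]
  · refine ncard_mul_le_of_rel (fun x y => y < x) T B _ _ ?_ ?_
    · intro a ha; rw [hdown, he a ha]
    · intro a ha; rw [hup, hd a ha]

/-! ### Parts of equal size -/

/-- Counting comparable pairs between `A ∩ B` and `T \ A` in a regular bipartite order bounds
every antichain `A` by the common size of the parts. -/
theorem hasWidth [Finite α] (h : TwoOrbit B T) (hn : B.ncard = T.ncard) :
    HasWidthP α B.ncard := by
  constructor
  · refine ⟨B, ?_, rfl⟩
    intro x hx y hy hne hle
    exact hne ((h.min y hy).eq_of_le hle)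
  · intro A hA
    obtain ⟨d, e, hd, he, hd0, -, -, -, hde⟩ := h.exists_degrees
    have hBpos : 0 < B.ncard := (Set.ncard_pos).2 (h.edge.imp fun _ hx => hx.1)
    have hde' : d = e := by
      rw [← hn] at hde
      exact Nat.eq_of_mul_eq_mul_left hBpos hde
    have hcount : (A ∩ B).ncard * d ≤ (T \ A).ncard * e := by
      refine ncard_mul_le_of_rel (· < ·) _ _ _ _ ?_ ?_
      · intro a ha
        rw [← hd a ha.2]
        refine Set.ncard_le_ncard fun x hx => ⟨⟨(h.lt_mem hx).2, fun hxA => ?_⟩, hx⟩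
        exact hA ha.1 hxA (ne_of_lt hx) (le_of_lt hx)
      · intro b hb
        rw [← he b hb.1]
        exact Set.ncard_le_ncard fun x hx => hx.2
    rw [← hde'] at hcount
    have h1 : (A ∩ B).ncard ≤ (T \ A).ncard := Nat.le_of_mul_le_mul_right hcount hd0
    have h2 : (A ∩ B).ncard + (A \ B).ncard = A.ncard := Set.ncard_inter_add_ncard_sdiff_eq_ncard A B
    have h3 : A \ B = T ∩ A := by
      ext x; simp [h.mem_T_iff, and_comm]
    have h4 := Set.ncard_inter_add_ncard_sdiff_eq_ncard T A
    rw [h3] at h2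
    omega

/-- In a splitting of the order into a lower and an upper piece, no point of the upper piece is
minimal and no point of the lower piece is maximal, so the pieces are `B` and `T`. -/
theorem coconnected (h : TwoOrbit B T) : CoconnectedP α := by
  rintro ⟨B', T', hB', hT', -, hun, hlt⟩
  obtain ⟨b, hb, t, ht, hbt⟩ := h.nonedge
  have hmem : ∀ x, x ∈ B' ∨ x ∈ T' := fun x => by
    have : x ∈ B' ∪ T' := hun ▸ Set.mem_univ x
    exact this
  obtain ⟨b', hb'⟩ := hB'
  obtain ⟨t', ht'⟩ := hT'
  have hbB : b ∈ B' := (hmem b).resolve_right fun hb2 => (h.min b hb).not_lt (hlt b' hb' b hb2)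
  have htT : t ∈ T' := (hmem t).resolve_left fun ht2 => (h.max t ht).not_lt (hlt t ht2 t' ht')
  exact hbt (hlt b hbB t htT)

theorem noCommonFixedPoint [Finite α] (h : TwoOrbit B T) : NoCommonFixedPoint α := by
  rintro ⟨p, hp⟩
  obtain ⟨d, e, -, -, hd0, hdT, he0, heB, -⟩ := h.exists_degrees
  rcases h.cover p with hpB | hpT
  · obtain ⟨q, hq, hne⟩ := Set.exists_ne_of_one_lt_ncard (s := B) (by omega) p
    obtain ⟨Φ, hΦ⟩ := h.transB p hpB q hq
    exact hne (hΦ.symm.trans (hp Φ))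
  · obtain ⟨q, hq, hne⟩ := Set.exists_ne_of_one_lt_ncard (s := T) (by omega) p
    obtain ⟨Φ, hΦ⟩ := h.transT p hpT q hq
    exact hne (hΦ.symm.trans (hp Φ))

/-- The minimal elements are exactly `B`, on which the automorphism group acts faithfully. -/
theorem card_aut_le_alphaRank [Finite α] (h : TwoOrbit B T) :
    Nat.card (α ≃o α) ≤ alphaRank α 0 := by
  have := finite_orderAut α
  rw [← Set.ncard_univ, alphaRank]
  refine Set.ncard_le_ncard_of_injOn (fun Φ : α ≃o α => fun x : ↥(rankSet α 0) => Φ x.1) ?_ ?_ ?_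
  · intro Φ _
    exact ⟨Φ, fun _ => rfl⟩
  · intro Φ _ Ψ _ hΦΨ
    refine h.eq_of_eqOn_B Φ Ψ fun x hx => ?_
    have hx0 : x ∈ rankSet α 0 :=
      ⟨by simp [lowSet], fun y hy => absurd hy (h.min x hx).not_lt⟩
    exact congrFun hΦΨ ⟨x, hx0⟩
  · exact Set.toFinite _

/-- If every point of `B` singles out one point of `T`, namely its only upper bound (`p` true)
or its only non-comparable point (`p` false), then `T` is a copy of `B` and every permutation
of `B` extends to an automorphism. -/
theorem factorial_le_card_aut [Finite α] (h : TwoOrbit B T) (hn : B.ncard = T.ncard) (p : Prop)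
    (hex : ∀ b ∈ B, ∃ t ∈ T, ∀ s ∈ T, b < s ↔ (s = t ↔ p)) :
    B.ncard.factorial ≤ Nat.card (α ≃o α) := by
  classical
  have := finite_orderAut α
  have hex' : ∀ b : {a // a ∈ B}, ∃ t : {a // a ∉ B}, ∀ s : {a // a ∉ B},
      (b : α) < s ↔ (s = t ↔ p) := by
    rintro ⟨b, hb⟩
    obtain ⟨t, ht, hts⟩ := hex b hb
    exact ⟨⟨t, (h.mem_T_iff t).1 ht⟩, fun s => by
      rw [hts s ((h.mem_T_iff s).2 s.2), Subtype.ext_iff]⟩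
  choose f hf using hex'
  have hinj : Function.Injective f := by
    intro x y hxy
    refine Subtype.ext (h.twinB _ x.2 _ y.2 fun t => ?_)
    by_cases ht : t ∈ B
    · exact ⟨fun hl => absurd hl (h.min t ht).not_lt, fun hl => absurd hl (h.min t ht).not_lt⟩
    · rw [hf x ⟨t, ht⟩, hf y ⟨t, ht⟩, hxy]
  have hcardT : Nat.card {a // a ∉ B} = T.ncard := by
    have hT : T = {a | a ∉ B} := Set.ext h.mem_T_iff
    rw [hT]; rfl
  have hcardB : Nat.card {a // a ∈ B} = B.ncard := rfl
  let e : {a // a ∈ B} ≃ {a // a ∉ B} :=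
    Equiv.ofBijective f (hinj.bijective_of_nat_card_le (by rw [hcardT, hcardB, hn]))
  have he : ∀ (b : {a // a ∈ B}) (s : {a // a ∉ B}), (b : α) < s ↔ (s = e b ↔ p) := hf
  let Φ : Equiv.Perm {a // a ∈ B} → Equiv.Perm α := fun σ =>
    Equiv.Perm.subtypeCongr σ (e.symm.trans (σ.trans e))
  have hΦB : ∀ σ x (hx : x ∈ B), Φ σ x = σ ⟨x, hx⟩ := fun σ x hx =>
    Equiv.Perm.subtypeCongr.left_apply _ _ hx
  have hΦT : ∀ σ x (hx : x ∉ B), Φ σ x = e (σ (e.symm ⟨x, hx⟩)) := fun σ x hx =>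
    Equiv.Perm.subtypeCongr.right_apply _ _ hx
  have hmem : ∀ σ x, Φ σ x ∈ B ↔ x ∈ B := by
    intro σ x
    by_cases hx : x ∈ B
    · rw [hΦB σ x hx]; exact iff_of_true (σ ⟨x, hx⟩).2 hx
    · rw [hΦT σ x hx]; exact iff_of_false (e (σ (e.symm ⟨x, hx⟩))).2 hx
  have hlt : ∀ σ x y, Φ σ x < Φ σ y ↔ x < y := by
    intro σ x y
    by_cases hx : x ∈ B
    · by_cases hy : y ∈ B
      · exact iff_of_false (h.min _ ((hmem σ y).2 hy)).not_lt (h.min y hy).not_lt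
      · rw [hΦB σ x hx, hΦT σ y hy, he, he ⟨x, hx⟩ ⟨y, hy⟩, e.injective.eq_iff,
          σ.injective.eq_iff, Equiv.symm_apply_eq]
    · have hx' : Φ σ x ∉ B := fun hc => hx ((hmem σ x).1 hc)
      exact iff_of_false (fun hl => hx' (h.lt_mem hl).1) (fun hl => hx (h.lt_mem hl).1)
  let Ψ : Equiv.Perm {a // a ∈ B} → (α ≃o α) := fun σ =>
    { toEquiv := Φ σ
      map_rel_iff' := by
        intro x y
        rw [le_iff_eq_or_lt, le_iff_eq_or_lt, hlt, (Φ σ).injective.eq_iff] }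
  rw [← hcardB, ← Nat.card_perm]
  refine Nat.card_le_card_of_injective Ψ ?_
  intro σ τ hστ
  ext x
  have h1 : Ψ σ x = Ψ τ x := by rw [hστ]
  have h2 : Φ σ x = Φ τ x := h1
  rwa [hΦB σ x x.2, hΦB τ x x.2] at h2

/-- A two-element set with a known member. -/
theorem _root_.exists_pair_of_mem {β : Type*} {s : Set β} (hs : s.ncard = 2) {x : β}
    (hx : x ∈ s) : ∃ y, y ≠ x ∧ s = {x, y} := by
  obtain ⟨a, b, hab, rfl⟩ := Set.ncard_eq_two.1 hs
  rcases hx with rfl | rfl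
  · exact ⟨b, hab.symm, rfl⟩
  · exact ⟨a, hab, Set.pair_comm _ _⟩

/-- A four-element set with three known members. -/
theorem _root_.exists_fourth {β : Type*} [Finite β] {s : Set β} (hs : s.ncard = 4) {x y z : β}
    (hx : x ∈ s) (hy : y ∈ s) (hz : z ∈ s) (hxy : x ≠ y) (hxz : x ≠ z) (hyz : y ≠ z) :
    ∃ w, w ≠ x ∧ w ≠ y ∧ w ≠ z ∧ s = {x, y, z, w} := by
  have h3 : ({x, y, z} : Set β).ncard = 3 := Set.ncard_eq_three.2 ⟨x, y, z, hxy, hxz, hyz, rfl⟩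
  obtain ⟨w, hw, hw'⟩ := Set.exists_mem_notMem_of_ncard_lt_ncard (s := {x, y, z}) (t := s)
    (by omega)
  simp only [Set.mem_insert_iff, Set.mem_singleton_iff, not_or] at hw'
  refine ⟨w, hw'.1, hw'.2.1, hw'.2.2, (Set.eq_of_subset_of_ncard_le ?_ ?_).symm⟩
  · rintro u (rfl | rfl | rfl | rfl) <;> assumption
  · rw [hs]
    have : ({x, y, z, w} : Set β) = insert w {x, y, z} := by ext; simp; tauto
    rw [this, Set.ncard_insert_of_notMem (by simp [hw'.1, hw'.2.1, hw'.2.2]), h3]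

/-- With four points on each side and all degrees two, the comparability graph is an 8-cycle:
the alternative, two 4-cycles, would contain two points with the same neighbours. -/
theorem isoC8 [Finite α] (h : TwoOrbit B T) (hB : B.ncard = 4) (hT : T.ncard = 4)
    (hup : ∀ b ∈ B, (Set.Ioi b).ncard = 2) (hdown : ∀ t ∈ T, (Set.Iio t).ncard = 2) :
    IsoC8 α := by
  obtain ⟨b0, hb0, t0, ht0, h00⟩ := h.edge
  -- Walk along the cycle `t0, b0, t1, b1, t2, b2`.
  obtain ⟨t1, ht10, hu0⟩ := exists_pair_of_mem (hup b0 hb0) (x := t0) h00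
  have h01 : b0 < t1 := by
    have : t1 ∈ Set.Ioi b0 := by rw [hu0]; simp
    exact this
  have ht1 := (h.lt_mem h01).2
  obtain ⟨b1, hb10, hd1⟩ := exists_pair_of_mem (hdown t1 ht1) (x := b0) h01
  have h11 : b1 < t1 := by
    have : b1 ∈ Set.Iio t1 := by rw [hd1]; simp
    exact this
  have hb1 := (h.lt_mem h11).1
  obtain ⟨t2, ht21, hu1⟩ := exists_pair_of_mem (hup b1 hb1) (x := t1) h11
  have h12 : b1 < t2 := by
    have : t2 ∈ Set.Ioi b1 := by rw [hu1]; simp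
    exact this
  have ht2 := (h.lt_mem h12).2
  have ht20 : t2 ≠ t0 := by
    rintro rfl
    refine hb10 (h.twinB _ hb1 _ hb0 fun t => ?_)
    rw [← Set.mem_Ioi, ← Set.mem_Ioi, hu0, hu1, Set.pair_comm]
  obtain ⟨b2, hb21, hd2⟩ := exists_pair_of_mem (hdown t2 ht2) (x := b1) h12
  have h22 : b2 < t2 := by
    have : b2 ∈ Set.Iio t2 := by rw [hd2]; simp
    exact this
  have hb2 := (h.lt_mem h22).1
  have u0 : ∀ t, b0 < t ↔ t = t0 ∨ t = t1 := fun t => by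
    rw [← Set.mem_Ioi, hu0]; simp
  have u1 : ∀ t, b1 < t ↔ t = t1 ∨ t = t2 := fun t => by
    rw [← Set.mem_Ioi, hu1]; simp
  have d1 : ∀ b, b < t1 ↔ b = b0 ∨ b = b1 := fun b => by
    rw [← Set.mem_Iio, hd1]; simp
  have d2 : ∀ b, b < t2 ↔ b = b1 ∨ b = b2 := fun b => by
    rw [← Set.mem_Iio, hd2]; simp
  have hb20 : b2 ≠ b0 := by
    rintro rfl
    rcases (u0 t2).1 h22 with hc | hc
    · exact ht20 hc
    · exact ht21 hc
  obtain ⟨b3, hb30, hb31, hb32, hBs⟩ := exists_fourth hB hb0 hb1 hb2 hb10.symm hb20.symm hb21.symm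
  obtain ⟨t3, ht30, ht31, ht32, hTs⟩ := exists_fourth hT ht0 ht1 ht2 ht10.symm ht20.symm ht21.symm
  have memB : ∀ x, x ∈ B ↔ x = b0 ∨ x = b1 ∨ x = b2 ∨ x = b3 := fun x => by rw [hBs]; simp
  have memT : ∀ x, x ∈ T ↔ x = t0 ∨ x = t1 ∨ x = t2 ∨ x = t3 := fun x => by rw [hTs]; simp
  have hb3 : b3 ∈ B := (memB b3).2 (by simp)
  have ht3 : t3 ∈ T := (memT t3).2 (by simp)
  -- Only `b2`, `b3` can lie below `t3`, and only `t0`, `t3` can lie above `b3`.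
  have hd3 : Set.Iio t3 = {b2, b3} := by
    refine Set.eq_of_subset_of_ncard_le ?_ ?_
    · intro x hx
      have hx' : x < t3 := hx
      have := (memB x).1 (h.lt_mem hx').1
      have h0 := u0 t3
      have h1 := u1 t3
      simp only [Set.mem_insert_iff, Set.mem_singleton_iff]
      grind
    · rw [hdown t3 ht3, Set.ncard_pair hb32.symm]
  have hu3 : Set.Ioi b3 = {t0, t3} := by
    refine Set.eq_of_subset_of_ncard_le ?_ ?_
    · intro x hx
      have hx' : b3 < x := hx
      have := (memT x).1 (h.lt_mem hx').2
      have h0 := d1 b3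
      have h1 := d2 b3
      simp only [Set.mem_insert_iff, Set.mem_singleton_iff]
      grind
    · rw [hup b3 hb3, Set.ncard_pair ht30.symm]
  have hu2 : Set.Ioi b2 = {t2, t3} := by
    refine (Set.eq_of_subset_of_ncard_le ?_ ?_).symm
    · have h23 : b2 ∈ Set.Iio t3 := by rw [hd3]; simp
      rintro x (rfl | rfl)
      · exact h22
      · exact h23
    · rw [hup b2 hb2, Set.ncard_pair ht32.symm]
  have u2 : ∀ t, b2 < t ↔ t = t2 ∨ t = t3 := fun t => by
    rw [← Set.mem_Ioi, hu2]; simp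
  have u3 : ∀ t, b3 < t ↔ t = t0 ∨ t = t3 := fun t => by
    rw [← Set.mem_Ioi, hu3]; simp
  let bb : Fin 4 → α := ![b0, b1, b2, b3]
  let tt : Fin 4 → α := ![t0, t1, t2, t3]
  have hbbB : ∀ i, bb i ∈ B := by
    intro i; fin_cases i <;> simp [bb, hb0, hb1, hb2, hb3]
  have httT : ∀ i, tt i ∈ T := by
    intro i; fin_cases i <;> simp [tt, ht0, ht1, ht2, ht3]
  have hbbi : Function.Injective bb := by
    intro i j hij
    fin_cases i <;> fin_cases j <;> simp [bb] at hij ⊢ <;> grind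
  have htti : Function.Injective tt := by
    intro i j hij
    fin_cases i <;> fin_cases j <;> simp [tt] at hij ⊢ <;> grind
  have hadj : ∀ i j, bb i < tt j ↔ (j = i ∨ j = i + 1) := by
    intro i j
    fin_cases i <;> fin_cases j <;> simp [bb, tt, u0, u1, u2, u3] <;> grind
  let f : Fin 4 × Bool → α := fun q => if q.2 then tt q.1 else bb q.1
  have hinj : Function.Injective f := by
    rintro ⟨i, s⟩ ⟨j, s'⟩ hij
    cases s <;> cases s' <;> simp only [f, if_true, Bool.false_eq_true, if_false] at hij
    · rw [hbbi hij]
    · exact absurd (httT j) (hij ▸ h.disj _ (hbbB i))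
    · exact absurd (httT i) (hij ▸ h.disj _ (hbbB j))
    · rw [htti hij]
  have hbij : Function.Bijective f := by
    refine hinj.bijective_of_nat_card_le ?_
    rw [h.ncard_add, hB, hT]
    simp
  refine ⟨(Equiv.ofBijective f hbij).symm, fun x y => ?_⟩
  obtain ⟨⟨i, s⟩, rfl⟩ := hbij.2 x
  obtain ⟨⟨j, s'⟩, rfl⟩ := hbij.2 y
  have hsymm : ∀ q, (Equiv.ofBijective f hbij).symm (f q) = q := fun q =>
    Equiv.ofBijective_symm_apply_apply f hbij q
  rw [hsymm, hsymm, le_iff_eq_or_lt, hinj.eq_iff]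
  refine or_congr Iff.rfl ?_
  cases s <;> cases s' <;> simp only [f, if_true, Bool.false_eq_true, if_false]
  · simpa using (h.min _ (hbbB j)).not_lt
  · simpa using hadj i j
  · simpa using (h.min _ (hbbB j)).not_lt
  · simpa using (h.max _ (httT i)).not_lt

/-- For parts of equal size `N`, the order has width `N` and the automorphism group acts
faithfully on the minimal elements, so failing to be max-locked bounds the group. -/
theorem card_aut_le_of_eq [Finite α] (h : TwoOrbit B T) (hn : B.ncard = T.ncard)
    (hnml : ¬ MaxLockedFull α) (hC8 : ¬ IsoC8 α) :
    Nat.card (α ≃o α) ≤ (B.ncard - 1).factorial := by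
  have hfin := finite_orderAut α
  obtain ⟨d, e, hd, he, hd0, hdT, he0, heB, hde⟩ := h.exists_degrees
  have hw := h.hasWidth hn
  have hα := h.card_aut_le_alphaRank
  by_contra hcon
  push Not at hcon
  refine hnml ?_
  by_cases h2 : B.ncard = 2
  · refine Or.inr ⟨h.coconnected, h2 ▸ hw, le_antisymm ?_ ?_⟩
    · have := card_aut_le_factorial B h.map_mem_B h.eq_of_eqOn_B
      simpa [h2] using this
    · rw [h2] at hcon; exact hcon
  refine Or.inl ⟨h.coconnected, h.noCommonFixedPoint, ?_⟩
  by_cases h4 : B.ncard = 4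
  · right
    refine ⟨h4 ▸ hw, 0, lt_of_lt_of_le ?_ hα⟩
    have hT4 : T.ncard = 4 := by omega
    have h24 : ∀ p : Prop, (∀ b ∈ B, ∃ t ∈ T, ∀ s ∈ T, b < s ↔ (s = t ↔ p)) →
        8 < Nat.card (α ≃o α) := by
      intro p hp
      have := h.factorial_le_card_aut hn p hp
      rw [h4] at this
      exact lt_of_lt_of_le (by decide) this
    have hd4 : d = 1 ∨ d = 2 ∨ d = 3 := by omega
    rcases hd4 with rfl | rfl | rfl
    · refine h24 True fun b hb => ?_
      obtain ⟨t, ht⟩ := Set.ncard_eq_one.1 (hd b hb)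
      have hbt : ∀ s, b < s ↔ s = t := fun s => by rw [← Set.mem_Ioi, ht]; simp
      exact ⟨t, (h.lt_mem ((hbt t).2 rfl)).2, fun s _ => by simp [hbt]⟩
    · have he2 : e = 2 := by rw [h4, hT4] at hde; omega
      subst he2
      exact absurd (h.isoC8 h4 hT4 hd he) hC8
    · refine h24 False fun b hb => ?_
      have hsub : Set.Ioi b ⊆ T := fun x hx => (h.lt_mem hx).2
      have hone : (T \ Set.Ioi b).ncard = 1 := by
        rw [Set.ncard_sdiff hsub, hT4, hd b hb]
      obtain ⟨t, ht⟩ := Set.ncard_eq_one.1 hone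
      have hbt : ∀ s, (s ∈ T ∧ ¬ b < s) ↔ s = t := fun s => by
        rw [← Set.mem_singleton_iff, ← ht]; simp
      exact ⟨t, ((hbt t).2 rfl).1, fun s hs => by simp [← hbt, hs]⟩
  · left
    exact ⟨B.ncard, hw, by omega, h4, 0, hcon.le.trans hα⟩

end TwoOrbit

theorem adequatelyBounded_of_single {α : Type*} [Finite α] [PartialOrder α]
    {parts : Set (Set α)} {w k : ℕ} (hk : k ≤ w - 1) (hcard : Nat.card (α ≃o α) ≤ k.factorial)
    (hsum : k ≤ (Nat.card α - parts.ncard) / 2) : AdequatelyBounded α parts w := by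
  have := finite_orderAut α
  refine ⟨1, fun _ => k, fun _ => hk, ?_, by simpa using hsum⟩
  refine le_trans (Set.ncard_le_card _) ?_
  simpa using hcard

theorem stmt14 {α : Type*} [Fintype α] [PartialOrder α]
    (B T : Set α) (hBT : B ≠ T)
    (hpart : Setoid.IsPartition ({B, T} : Set (Set α)))
    (hanti : ∀ s ∈ ({B, T} : Set (Set α)), IsAntichain (· ≤ ·) s)
    (hBmin : ∀ b ∈ B, IsMin b) (hTmax : ∀ t ∈ T, IsMax t)
    (hIOU : IsIOU α ({B, T} : Set (Set α)) Set.univ)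
    (hnml : ¬ MaxLockedFull α) (hcard : 1 < Fintype.card α)
    (htight : TightP α ({B, T} : Set (Set α)))
    (hC8 : ¬ IsoC8 α) :
    AdequatelyBounded α ({B, T} : Set (Set α)) (max B.ncard T.ncard) := by
  have h := twoOrbit_of_tight B T hBT hpart hanti hBmin hTmax hIOU htight
  have hparts : ({B, T} : Set (Set α)).ncard = 2 := Set.ncard_pair hBT
  have hcardα := h.ncard_add
  obtain ⟨d, e, -, -, hd0, hdT, he0, heB, hde⟩ := h.exists_degrees
  rcases lt_trichotomy B.ncard T.ncard with hlt | heq | hgt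
  · -- If `|T| = |B| + 1`, then `|B| * d = (|B| + 1) * e` makes `|B|` divide `e < |B|`.
    have hne : T.ncard ≠ B.ncard + 1 := by
      intro hT
      have hdvd : B.ncard ∣ e := by
        refine (Nat.dvd_add_right (Dvd.intro e rfl)).1 (Dvd.intro d ?_ : B.ncard ∣ B.ncard * e + e)
        rw [hde, hT]; ring
      exact absurd (Nat.le_of_dvd he0 hdvd) (by omega)
    refine adequatelyBounded_of_single (k := B.ncard) ?_
      (card_aut_le_factorial B h.map_mem_B h.eq_of_eqOn_B) ?_
    · omega
    · omega
  · refine adequatelyBounded_of_single (k := B.ncard - 1) ?_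
      (h.card_aut_le_of_eq heq hnml hC8) ?_
    · omega
    · omega
  · have hne : B.ncard ≠ T.ncard + 1 := by
      intro hB
      have hdvd : T.ncard ∣ d := by
        refine (Nat.dvd_add_right (Dvd.intro d rfl)).1 (Dvd.intro e ?_ : T.ncard ∣ T.ncard * d + d)
        rw [← hde, hB]; ring
      exact absurd (Nat.le_of_dvd hd0 hdvd) (by omega)
    refine adequatelyBounded_of_single (k := T.ncard) ?_
      (card_aut_le_factorial T h.map_mem_T h.eq_of_eqOn_T) ?_
    · omega
    · omega
end

section
/- For every w ≥ 1, the number of order-preserving self-maps of wC_2 that map the set of minimal elements into itself and the set of maximal elements into itself is at least w^w; and for every w ≥ 3, the number of order-preserving self-maps of S_w that map the set of minimal elements into itself and the set of maximal elements into itself is at least (w−1)^w. -/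
/-! Every self-map `a` of the index set induces the map `(i, b) ↦ (a i, b)` of `wC_2`, which gives
`w ^ w` maps. In `S_w`, collapse all maximal elements to `u_0`: the minimal elements may then be
sent independently to any of the `w - 1` elements `ℓ_j` with `j ≠ 0`, all of which lie below `u_0`.
That these maps respect the two levels follows from the identification of the minimal and maximal
elements with the levels `false` and `true`. -/

/-- `KC2 k` is the carrier of the ordered set `kC_2`, the disjoint union of `k`
two-element chains: the element `(i, false)` is the bottom and `(i, true)` the top
of the `i`-th chain. -/
def KC2 (k : ℕ) : Type := Fin k × Bool

instance (k : ℕ) : PartialOrder (KC2 k) where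
  le a b := a.1 = b.1 ∧ a.2 ≤ b.2
  le_refl a := ⟨rfl, le_refl _⟩
  le_trans a b c hab hbc := ⟨hab.1.trans hbc.1, le_trans hab.2 hbc.2⟩
  le_antisymm a b hab hba := by
    have h1 : a.1 = b.1 := hab.1
    have h2 : a.2 = b.2 := le_antisymm hab.2 hba.2
    exact Prod.ext h1 h2

/-- `SW k` is the carrier of the standard example `S_k`: `(i, false)` is the minimal
element `ℓ_i`, `(i, true)` is the maximal element `u_i`, and `ℓ_i < u_j` iff `i ≠ j`. -/
def SW (k : ℕ) : Type := Fin k × Bool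

instance (k : ℕ) : PartialOrder (SW k) where
  le a b := a = b ∨ (a.2 = false ∧ b.2 = true ∧ a.1 ≠ b.1)
  le_refl a := Or.inl rfl
  le_trans a b c hab hbc := by
    rcases hab with rfl | ⟨ha, hb, hab⟩
    · exact hbc
    · rcases hbc with rfl | ⟨hb', hc, hbc⟩
      · exact Or.inr ⟨ha, hb, hab⟩
      · rw [hb] at hb'; exact absurd hb' (by simp)
  le_antisymm a b hab hba := by
    rcases hab with rfl | ⟨ha, hb, hab⟩
    · rfl
    · rcases hba with rfl | ⟨hb', ha', hba⟩
      · rfl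
      · rw [hb] at hb'; exact absurd hb' (by simp)

lemma KC2.isMin_iff {k : ℕ} (x : KC2 k) : IsMin x ↔ x.2 = false := by
  obtain ⟨i, b⟩ := x
  constructor
  · intro h
    have h1 : b ≤ false := (h (b := (i, false)) ⟨rfl, Bool.false_le b⟩).2
    exact le_bot_iff.mp h1
  · rintro (rfl : b = false) y ⟨h1, -⟩
    exact ⟨h1.symm, Bool.false_le _⟩

lemma KC2.isMax_iff {k : ℕ} (x : KC2 k) : IsMax x ↔ x.2 = true := by
  obtain ⟨i, b⟩ := x
  constructor
  · intro h
    have h1 : true ≤ b := (h (b := (i, true)) ⟨rfl, Bool.le_true b⟩).2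
    exact top_le_iff.mp h1
  · rintro (rfl : b = true) y ⟨h1, -⟩
    exact ⟨h1.symm, Bool.le_true _⟩

/-- At least two indices are needed: in `S_1` every element is minimal. -/
lemma SW.isMin_iff {k : ℕ} (hk : 2 ≤ k) (x : SW k) : IsMin x ↔ x.2 = false := by
  obtain ⟨i, b⟩ := x
  constructor
  · intro h
    cases b with
    | false => rfl
    | true =>
      have : Nontrivial (Fin k) := Fin.nontrivial_iff_two_le.mpr hk
      obtain ⟨j, hj⟩ := exists_ne i
      rcases h (b := (j, false)) (Or.inr ⟨rfl, rfl, hj⟩) with h | ⟨h, -⟩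
      · exact absurd (congrArg Prod.snd h) (by simp)
      · exact h
  · rintro (rfl : b = false) y (rfl | ⟨-, h, -⟩)
    · exact le_rfl
    · cases h

lemma SW.isMax_iff {k : ℕ} (hk : 2 ≤ k) (x : SW k) : IsMax x ↔ x.2 = true := by
  obtain ⟨i, b⟩ := x
  constructor
  · intro h
    cases b with
    | true => rfl
    | false =>
      have : Nontrivial (Fin k) := Fin.nontrivial_iff_two_le.mpr hk
      obtain ⟨j, hj⟩ := exists_ne i
      rcases h (b := (j, true)) (Or.inr ⟨rfl, rfl, hj.symm⟩) with h | ⟨h, -⟩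
      · exact absurd (congrArg Prod.snd h) (by simp)
      · exact absurd h (by simp)
  · rintro (rfl : b = true) y (rfl | ⟨h, -⟩)
    · exact le_rfl
    · cases h

instance (k : ℕ) : Finite (KC2 k) := inferInstanceAs (Finite (Fin k × Bool))

instance (k : ℕ) : Finite (SW k) := inferInstanceAs (Finite (Fin k × Bool))

lemma card_le_ncard_of_injective {α β : Type*} [Finite β] {s : Set β} (g : α → β)
    (hg : Function.Injective g) (hs : ∀ a, g a ∈ s) : Nat.card α ≤ s.ncard := by
  rw [← Set.ncard_univ, ← Set.ncard_image_of_injective _ hg]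
  exact Set.ncard_le_ncard (by rintro _ ⟨a, -, rfl⟩; exact hs a) (Set.toFinite s)

/-- The self-map of `kC_2` that moves whole chains according to `a`. -/
def KC2.lift {k : ℕ} (a : Fin k → Fin k) : KC2 k → KC2 k := fun x => (a x.1, x.2)

/-- The self-map of `S_{n+1}` that sends every `u_i` to `u_0` and `ℓ_i` to `ℓ_{a i + 1}`; the shift
by one makes the image of `ℓ_i` range over exactly the minimal elements below `u_0`. -/
def SW.collapse {n : ℕ} (a : Fin (n + 1) → Fin n) : SW (n + 1) → SW (n + 1) := fun x =>
  if x.2 then (0, true) else ((a x.1).succ, false)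

/-- `wC_2` has at least `w^w` order-preserving self-maps mapping
minimal elements to minimal elements and maximal elements to maximal elements;
for `w ≥ 3`, `S_w` has at least `(w-1)^w` such maps. -/
theorem stmt16 :
    (∀ w : ℕ, 1 ≤ w →
      w ^ w ≤ Set.ncard {f : KC2 w → KC2 w | Monotone f ∧
        (∀ x, IsMin x → IsMin (f x)) ∧ (∀ x, IsMax x → IsMax (f x))}) ∧
    (∀ w : ℕ, 3 ≤ w →
      (w - 1) ^ w ≤ Set.ncard {f : SW w → SW w | Monotone f ∧
        (∀ x, IsMin x → IsMin (f x)) ∧ (∀ x, IsMax x → IsMax (f x))}) := by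
  constructor
  · intro w _
    have hcard : Nat.card (Fin w → Fin w) = w ^ w := by simp
    rw [← hcard]
    refine card_le_ncard_of_injective KC2.lift ?_ ?_
    · intro a a' h
      funext i
      exact congrArg Prod.fst (congrFun h (i, false))
    · intro a
      refine ⟨fun x y h => ⟨congrArg a h.1, h.2⟩, fun x hx => ?_, fun x hx => ?_⟩
      · rw [KC2.isMin_iff] at hx ⊢
        exact hx
      · rw [KC2.isMax_iff] at hx ⊢
        exact hx
  · intro w hw
    obtain ⟨n, rfl⟩ : ∃ n, w = n + 1 := ⟨w - 1, by omega⟩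
    have hk : 2 ≤ n + 1 := by omega
    have hcard : Nat.card (Fin (n + 1) → Fin n) = (n + 1 - 1) ^ (n + 1) := by simp
    rw [← hcard]
    refine card_le_ncard_of_injective SW.collapse ?_ ?_
    · intro a a' h
      funext i
      exact Fin.succ_injective _ (congrArg Prod.fst (congrFun h (i, false)))
    · intro a
      refine ⟨?_, fun x hx => ?_, fun x hx => ?_⟩
      · rintro x y (rfl | ⟨hx, hy, -⟩)
        · exact le_rfl
        · have h1 : SW.collapse a x = ((a x.1).succ, false) := by
            simp only [SW.collapse, hx]; rfl
          have h2 : SW.collapse a y = (0, true) := by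
            simp only [SW.collapse, hy]; rfl
          rw [h1, h2]
          exact Or.inr ⟨rfl, rfl, Fin.succ_ne_zero _⟩
      · rw [SW.isMin_iff hk] at hx ⊢
        simp [SW.collapse, hx]
      · rw [SW.isMax_iff hk] at hx ⊢
        simp [SW.collapse, hx]
end

section
/- Let w ∈ ℕ and ε > 0. There is an N ∈ ℕ such that every finite ordered set P of width at most w with n := |P| ≥ N elements has at least 2^{(1−ε)·n} endomorphisms. -/
/-!
Let `r` be the height function of `α`, `h` its maximal value, and `c₀ < ⋯ < c_h` a longest chain.
For any set `S` of elements of height `< h`, the map sending `x` to `c_{r x + 1}` if `x ∈ S` and to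
`c_{r x}` otherwise is order preserving, since `x < y` forces `r x + 1 ≤ r y`. Distinct `S` give
distinct maps. The elements of height exactly `h` form an antichain, so there are at most `w` of
them, and there are at least `2 ^ (n - w)` endomorphisms; this suffices once `n ≥ w / ε`.
-/

/-- The bound `2 ^ (n - w) ≤ |End(α)|`, stated without truncated subtraction as
`2 ^ t ≤ |End(α)|` with `n ≤ t + w`. -/
lemma exists_pow_le_ncard_monotone (w : ℕ) (α : Type) [Fintype α] [PartialOrder α] [Nonempty α]
    (hw : ∀ s : Set α, IsAntichain (· ≤ ·) s → s.ncard ≤ w) :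
    ∃ t : ℕ, Fintype.card α ≤ t + w ∧ 2 ^ t ≤ Set.ncard {f : α → α | Monotone f} := by
  classical
  have : FiniteDimensionalOrder α := by
    by_contra hinf
    rw [not_finiteDimensionalOrder_iff] at hinf
    have hlt := (LTSeries.withLength α (Fintype.card α)).length_lt_card
    rw [LTSeries.length_withLength] at hlt
    exact lt_irrefl _ hlt
  let p : LTSeries α := LTSeries.longestOf α
  let h : ℕ := p.length
  let r : α → ℕ := fun x => (Order.height x).toNat
  have hle (x : α) : Order.height x ≤ (h : ℕ∞) :=
    Order.height_le fun q _ => by exact_mod_cast q.longestOf_is_longest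
  have hfin (x : α) : Order.height x < ⊤ := lt_of_le_of_lt (hle x) (ENat.natCast_lt_top h)
  have hr (x : α) : r x ≤ h := ENat.toNat_le_of_le_natCast (hle x)
  have hmono {x y : α} (hxy : x < y) : r x < r y := by
    have hlt := Order.height_strictMono hxy (hfin x)
    rw [← ENat.natCast_toNat (hfin x).ne, ← ENat.natCast_toNat (hfin y).ne] at hlt
    exact_mod_cast hlt
  let c : ℕ → α := fun k => p ⟨min k h, by omega⟩
  have hc : Monotone c := fun i j hij =>
    p.strictMono.monotone (Fin.mk_le_mk.2 (min_le_min_right h hij))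
  have hcinj {i j : ℕ} (hi : i ≤ h) (hj : j ≤ h) (hij : c i = c j) : i = j := by
    have := congrArg Fin.val (p.strictMono.injective hij)
    simpa [min_eq_left hi, min_eq_left hj] using this
  let T : Finset α := Finset.univ.filter fun x => r x < h
  let F : Finset α → α → α := fun S x => c (r x + if x ∈ S then 1 else 0)
  have htop : (Finset.univ.filter fun x => ¬ r x < h).card ≤ w := by
    rw [← Set.ncard_coe_finset]
    apply hw
    intro x hx y hy hne hxy
    have := hmono (lt_of_le_of_ne hxy hne)
    have := hr y
    simp at hx
    omega
  refine ⟨T.card, ?_, ?_⟩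
  · have := Finset.card_filter_add_card_filter_not (s := (Finset.univ : Finset α))
      (fun x => r x < h)
    rw [Finset.card_univ] at this
    change Fintype.card α ≤ (Finset.univ.filter fun x => r x < h).card + w
    omega
  · rw [← Finset.card_powerset, ← Set.ncard_coe_finset]
    refine Set.ncard_le_ncard_of_injOn F ?_ ?_ (Set.toFinite _)
    · intro S _ x y hxy
      rcases hxy.eq_or_lt with rfl | hlt
      · exact le_rfl
      · apply hc
        have := hmono hlt
        split_ifs <;> omega
    · intro S hS S' hS' heq
      have hS : S ⊆ T := by simpa using hS
      have hS' : S' ⊆ T := by simpa using hS'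
      ext x
      by_cases hx : x ∈ T
      · have hlt : r x < h := (Finset.mem_filter.1 hx).2
        have := hcinj (by split_ifs <;> omega) (by split_ifs <;> omega) (congrFun heq x)
        by_cases h1 : x ∈ S <;> by_cases h2 : x ∈ S' <;> simp [h1, h2] at this ⊢
      · exact ⟨fun hm => absurd (hS hm) hx, fun hm => absurd (hS' hm) hx⟩

/-- For every `w` and `ε > 0` there is `N` such that every finite
ordered set of width at most `w` with `n ≥ N` elements has at least `2^((1−ε)·n)`
endomorphisms (order-preserving self-maps). -/
theorem stmt17 (w : ℕ) (ε : ℝ) (hε : 0 < ε) :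
    ∃ N : ℕ, ∀ (α : Type) [Fintype α] [PartialOrder α],
      (∀ s : Set α, IsAntichain (· ≤ ·) s → s.ncard ≤ w) →
      N ≤ Fintype.card α →
      (2 : ℝ) ^ ((1 - ε) * (Fintype.card α : ℝ)) ≤
        (Set.ncard {f : α → α | Monotone f} : ℝ) := by
  -- The summand `1` makes `α` nonempty, so that a longest chain exists.
  refine ⟨⌈(w : ℝ) / ε⌉₊ + 1, fun α _ _ hw hN => ?_⟩
  have : Nonempty α := Fintype.card_pos_iff.1 (by omega)
  obtain ⟨t, ht, hcard⟩ := exists_pow_le_ncard_monotone w α hw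
  have hwn : (w : ℝ) ≤ ε * Fintype.card α := by
    have h1 : (w : ℝ) / ε ≤ Fintype.card α :=
      (Nat.le_ceil _).trans (by exact_mod_cast (Nat.le_succ _).trans hN)
    rwa [div_le_iff₀' hε] at h1
  have ht' : (Fintype.card α : ℝ) ≤ t + w := by exact_mod_cast ht
  calc (2 : ℝ) ^ ((1 - ε) * (Fintype.card α : ℝ)) ≤ (2 : ℝ) ^ (t : ℝ) :=
        Real.rpow_le_rpow_of_exponent_le one_le_two (by linarith)
    _ = ((2 ^ t : ℕ) : ℝ) := by rw [Real.rpow_natCast]; push_cast; rfl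
    _ ≤ _ := by exact_mod_cast hcard
end

section
/- The Automorphism Conjecture is true for ordered sets of width at most 11: for every ε > 0 there is an N ∈ ℕ such that every finite ordered set P with |P| ≥ N and width w(P) ≤ 11 satisfies |Aut(P)| < ε·|End(P)|; equivalently, lim_{n→∞} max_{|P| = n, w(P) ≤ 11} |Aut(P)|/|End(P)| = 0. -/
/-!
Let `P` have `n` points and width at most 11, and let `G = Aut(P)`. Choosing between two consecutive
elements of a longest chain for each point according to its height gives `|End(P)| ≥ 2 ^ (n - 11)`
(`two_pow_le_card_end`). Each orbit of `G` is an antichain, hence has at most 11 points. The aim is to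
show that `|G|` is at most about `(39/20) ^ n`, unless `P` has many endomorphisms for another reason.

Call an orbit collapsible if an endomorphism moving at most 22 points is not injective on it.
Composing automorphisms with these endomorphisms shows that `m` collapsible orbits force
`m * |G| ≤ 22! * 22 * |End(P)|` (`local_count`). So the number of collapsible orbits may be assumed
bounded.

For a point `x` let `fixer x` be the pointwise stabilizer of its orbit. The minimal ones among these
subgroups intersect trivially, so `|G|` is at most the product of their indices. Group the points by
the value of `fixer x`. A minimal value `H` whose class contains a collapsible orbit contributes an
index of at most `11!`. For the other minimal values, `class_bound` shows that the index of `H` is at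
most `(39/20) ^ c`, where `c` is the number of points in the class:

* In an orbit that is not collapsible, distinct points have distinct sets of comparable points
  (`iInf_link_le`). Comparability to another orbit partitions the orbit into blocks, so these block
  systems together separate points. If in some orbit of the class no single other orbit separates
  points, then the action on the orbit preserves several nontrivial block systems with trivial common
  refinement, and is small (`index_light`).
* Otherwise every orbit of the class is separated by another orbit, which lies in the class too by
  minimality of `H`. With `k` the least size of an orbit in the class, the index is at most `k!`, and
  this suffices for two orbits if `k ≤ 8` and for three orbits if `k ≤ 11`. There remain two orbits of
  at least 9 points. If neither is linked to a third orbit, both can be collapsed simultaneously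
  (`collapsible_of_isolated_pair`); if one of them is, the action on it is imprimitive and the index is
  at most `100000 ≤ (39/20) ^ 18` (`index_normalCore_imprimitive_le`).
-/

/-! ### Indices of normal cores -/

section GroupTheory

variable {G : Type*} [Group G] [Finite G]

theorem index_le_of_subgroup_le {H K : Subgroup G} (h : H ≤ K) : K.index ≤ H.index :=
  Nat.le_of_dvd (Nat.pos_of_ne_zero Subgroup.index_ne_zero_of_finite) (Subgroup.index_dvd_of_le h)

theorem index_normalCore_le_factorial (H : Subgroup G) : H.normalCore.index ≤ H.index.factorial := by
  classical
  rw [Subgroup.normalCore_eq_ker, Subgroup.index_ker]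
  refine (Nat.card_le_card_of_injective (Subtype.val) Subtype.val_injective).trans ?_
  rw [Nat.card_perm, Subgroup.index]

/-- A subgroup `C` normalized by `U` has at most `U.index` conjugates, and `C.normalCore` is their
intersection. -/
theorem index_normalCore_le_pow (C U : Subgroup G) (hU : U ≤ Subgroup.normalizer (C : Set G)) :
    C.normalCore.index ≤ C.index ^ U.index := by
  classical
  have : Fintype (G ⧸ U) := Fintype.ofFinite _
  let f : G ⧸ U → Subgroup G := fun q => C.map (MulAut.conj q.out).toMonoidHom
  have hf : (⨅ q, f q) ≤ C.normalCore := by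
    intro h hh g
    obtain ⟨u, hu⟩ := QuotientGroup.mk_out_eq_mul U g⁻¹
    have h1 := (Subgroup.mem_iInf.mp hh) (QuotientGroup.mk g⁻¹)
    obtain ⟨c, hc, hch⟩ := Subgroup.mem_map.mp h1
    have h2 : g * h * g⁻¹ = u * c * (u : G)⁻¹ := by
      rw [← hch]
      simp [hu, mul_assoc]
    rw [h2]
    exact (Subgroup.mem_normalizer_iff.mp (hU u.2) c).mp hc
  refine (index_le_of_subgroup_le hf).trans ((Subgroup.index_iInf_le f).trans ?_)
  have : ∀ q, (f q).index = C.index := fun q =>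
    Subgroup.index_map_equiv C (MulAut.conj q.out)
  simp only [this, Finset.prod_const, Finset.card_univ]
  rw [← Nat.card_eq_fintype_card, ← Subgroup.index]

/-- If two systems of blocks separate points, an element fixing all blocks of both is trivial on
`G ⧸ S`. -/
theorem index_normalCore_inf_le {S U V : Subgroup G} (h : U ⊓ V ≤ S) :
    S.normalCore.index ≤ U.index.factorial * V.index.factorial := by
  have h1 : U.normalCore ⊓ V.normalCore ≤ S.normalCore :=
    Subgroup.normal_le_normalCore.mpr
      ((inf_le_inf U.normalCore_le V.normalCore_le).trans h)
  exact (index_le_of_subgroup_le h1).trans (Subgroup.index_inf_le.trans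
    (Nat.mul_le_mul (index_normalCore_le_factorial U) (index_normalCore_le_factorial V)))

/-- For `S ≤ U`, the action on `G ⧸ S` has `U.index` blocks of `S.relIndex U` points each. The
pointwise stabilizer of one block is normalized by the stabilizer `U` of that block, so
`index_normalCore_le_pow` applies to it. -/
theorem index_normalCore_imprimitive (S U : Subgroup G) :
    S.normalCore.index ≤ ((S.relIndex U).factorial * U.index) ^ U.index := by
  set C := (S.subgroupOf U).normalCore.map U.subtype with hC
  have hCS : C ≤ S := by
    rw [hC, Subgroup.map_le_iff_le_comap]
    exact Subgroup.normalCore_le _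
  have hCU : C ≤ U := Subgroup.map_subtype_le _
  have hn : U ≤ Subgroup.normalizer (C : Set G) := by
    rw [← Subgroup.normal_subgroupOf_iff_le_normalizer hCU, hC, Subgroup.subgroupOf,
      Subgroup.comap_map_eq_self_of_injective (Subgroup.subtype_injective U)]
    exact Subgroup.normalCore_normal _
  have h1 : S.normalCore.index ≤ C.normalCore.index :=
    index_le_of_subgroup_le (Subgroup.normalCore_mono hCS)
  refine h1.trans ((index_normalCore_le_pow C U hn).trans (Nat.pow_le_pow_left ?_ _))
  rw [hC, Subgroup.index_map_subtype]
  exact Nat.mul_le_mul_right _ (index_normalCore_le_factorial _)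

/-- An imprimitive permutation group of degree 9, 10 or 11 (in fact 9 or 10, as 11 is prime) has order
at most 100000. The extreme case of the bound is five blocks of two points. -/
theorem index_normalCore_imprimitive_le {S U : Subgroup G} (hSU : S ≤ U) (hne : U ≠ S)
    (htop : U ≠ ⊤) (h9 : 9 ≤ S.index) (h11 : S.index ≤ 11) :
    S.normalCore.index ≤ 100000 := by
  refine (index_normalCore_imprimitive S U).trans ?_
  have h1 := Subgroup.relIndex_mul_index hSU
  have h2 : S.relIndex U ≠ 1 := fun h => hne (le_antisymm (Subgroup.relIndex_eq_one.mp h) hSU)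
  have h3 : U.index ≠ 1 := fun h => htop (Subgroup.index_eq_one.mp h)
  generalize S.relIndex U = b at *
  generalize U.index = a at *
  generalize S.index = m at *
  have ha : a ≤ 11 := by nlinarith [Nat.pos_of_ne_zero (show b ≠ 0 by rintro rfl; omega)]
  interval_cases a <;> try omega
  all_goals
    have hb : b ≤ 5 := by omega
    interval_cases b <;> first | omega | decide

/-- If `S` has index two in both `U` and `V` but `U ⊓ V = S`, then the normalizer of `S` contains
`S` with index at least four; as `S.index ≤ 11`, there are at most two conjugates of `S`. -/
theorem index_normalCore_two_two {S U V : Subgroup G} (hU : S ≤ U) (hV : S ≤ V)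
    (hU2 : S.relIndex U = 2) (hV2 : S.relIndex V = 2) (hne : U ⊓ V = S)
    (h11 : S.index ≤ 11) : S.normalCore.index ≤ S.index ^ 2 := by
  set N := Subgroup.normalizer (S : Set G) with hN
  have hUN : U ≤ N := by
    rw [hN, ← Subgroup.normal_subgroupOf_iff_le_normalizer hU]
    exact Subgroup.normal_of_index_eq_two hU2
  have hVN : V ≤ N := by
    rw [hN, ← Subgroup.normal_subgroupOf_iff_le_normalizer hV]
    exact Subgroup.normal_of_index_eq_two hV2
  have hSN : S ≤ N := hU.trans hUN
  have h1 := Subgroup.relIndex_mul_index hSN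
  have h2 := Subgroup.relIndex_mul_relIndex S U N hU hUN
  have h3 : U.relIndex N ≠ 1 := by
    intro h
    have hVU : V ≤ U := hVN.trans (Subgroup.relIndex_eq_one.mp h)
    rw [inf_eq_right.mpr hVU] at hne
    rw [hne, Subgroup.relIndex_self] at hV2
    omega
  have h4 : S.index ≠ 0 := Subgroup.index_ne_zero_of_finite
  have h5 : N.index ≤ 2 := by
    rw [hU2] at h2
    rw [← h2] at h1
    have : U.relIndex N ≠ 0 := by
      intro h; rw [h] at h1; omega
    have : 2 ≤ U.relIndex N := by omega
    nlinarith
  exact (index_normalCore_le_pow S N le_rfl).trans (Nat.pow_le_pow_right (by omega) h5)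

/-- A transitive action on at most 11 points, given by the point stabilizer `S`, such that a family of
block systems (given by the block stabilizers `U i`) separates points although none of its members
does so alone, has an image of order at most `(39 / 20) ^ S.index`. Two of the block systems already
separate points, except on eight points with blocks of size four, where three may be needed. -/
theorem index_light {ι : Type*} {S : Subgroup G} (U : ι → Subgroup G)
    (hS : ∀ i, S ≤ U i) (hne : ∀ i, U i ≠ S) (hinf : ⨅ i, U i ≤ S) (h11 : S.index ≤ 11) :
    (S.normalCore.index : ℝ) ≤ (39 / 20 : ℝ) ^ S.index := by
  classical
  by_cases htop : S = ⊤
  · have : S.normalCore = ⊤ := by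
      have := Subgroup.normal_le_normalCore (H := S) (N := ⊤)
      exact top_le_iff.mp (this.mpr htop.ge)
    rw [this, htop]
    norm_num
  have hm0 : S.index ≠ 0 := Subgroup.index_ne_zero_of_finite
  have hex : ∃ i, U i ≠ ⊤ := by
    by_contra! h
    apply htop
    rw [eq_top_iff]
    refine le_trans ?_ hinf
    simp [h]
  have hb2 : ∀ i, 2 ≤ S.relIndex (U i) := by
    intro i
    have h1 : S.relIndex (U i) ≠ 1 := fun h =>
      hne i (le_antisymm (Subgroup.relIndex_eq_one.mp h) (hS i))
    have h2 : S.relIndex (U i) ≠ 0 := Subgroup.index_ne_zero_of_finite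
    omega
  have hmul : ∀ i, S.relIndex (U i) * (U i).index = S.index := fun i =>
    Subgroup.relIndex_mul_index (hS i)
  have ha2 : ∀ i, U i ≠ ⊤ → 2 ≤ (U i).index := by
    intro i hi
    have h1 : (U i).index ≠ 1 := fun h => hi (Subgroup.index_eq_one.mp h)
    have h2 : (U i).index ≠ 0 := Subgroup.index_ne_zero_of_finite
    omega
  -- a proper `U i` with as few points per block as possible
  obtain ⟨i, hi, himin⟩ : ∃ i, U i ≠ ⊤ ∧ ∀ j, U j ≠ ⊤ → S.relIndex (U i) ≤ S.relIndex (U j) := by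
    have hne' : {b | ∃ i, U i ≠ ⊤ ∧ S.relIndex (U i) = b}.Nonempty := by
      obtain ⟨i, hi⟩ := hex
      exact ⟨_, i, hi, rfl⟩
    obtain ⟨i, hi, hib⟩ := Nat.sInf_mem hne'
    exact ⟨i, hi, fun j hj => hib ▸ Nat.sInf_le ⟨j, hj, rfl⟩⟩
  -- any subgroup strictly above `S` is cut down by some `U j`
  have hcut : ∀ T : Subgroup G, S ≤ T → T ≠ S → ∃ j, ¬ T ≤ U j := by
    intro T hT hTS
    by_contra! h
    exact hTS (le_antisymm ((le_iInf h).trans hinf) hT)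
  have hdrop : ∀ T : Subgroup G, S ≤ T → ∀ j, ¬ T ≤ U j →
      ∃ d, d ≠ 1 ∧ S.relIndex (T ⊓ U j) * d = S.relIndex T := by
    intro T hT j hj
    refine ⟨(T ⊓ U j).relIndex T, ?_, Subgroup.relIndex_mul_relIndex _ _ _
      (le_inf hT (hS j)) inf_le_left⟩
    intro h
    exact hj ((Subgroup.relIndex_eq_one.mp h).trans inf_le_right)
  have hntop : ∀ T : Subgroup G, ∀ j, ¬ T ≤ U j → U j ≠ ⊤ := by
    intro T j hj h
    exact hj (h ▸ le_top)
  obtain ⟨j, hj⟩ := hcut (U i) (hS i) (hne i)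
  obtain ⟨d, hd1, hd⟩ := hdrop _ (hS i) j hj
  have hjt := hntop _ j hj
  have hbi := hb2 i
  have hbj := himin j hjt
  have hai := ha2 i hi
  have haj := ha2 j hjt
  have hmi := hmul i
  have hmj := hmul j
  by_cases hc : U i ⊓ U j = S
  · have hbound := index_normalCore_inf_le hc.le
    by_cases h22 : S.relIndex (U j) = 2
    · have h22' : S.relIndex (U i) = 2 := by omega
      have hb := index_normalCore_two_two (hS i) (hS j) h22' h22 hc h11
      rw [h22] at hmj
      rw [h22'] at hmi
      have hb' : (S.normalCore.index : ℝ) ≤ (S.index : ℝ) ^ 2 := by exact_mod_cast hb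
      have hbd' : (S.normalCore.index : ℝ) ≤
          (((U i).index.factorial * (U j).index.factorial : ℕ) : ℝ) := by exact_mod_cast hbound
      generalize S.normalCore.index = N at *
      generalize (U i).index = a at *
      generalize (U j).index = a' at *
      have : a' = a := by omega
      subst this
      rw [← hmi] at hb' ⊢
      have : a' ≤ 5 := by omega
      interval_cases a'
      · refine hbd'.trans ?_; norm_num [Nat.factorial]
      · refine hbd'.trans ?_; norm_num [Nat.factorial]
      · refine hb'.trans ?_; norm_num
      · refine hb'.trans ?_; norm_num
    · have hbd' : (S.normalCore.index : ℝ) ≤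
          (((U i).index.factorial * (U j).index.factorial : ℕ) : ℝ) := by exact_mod_cast hbound
      refine hbd'.trans ?_
      generalize S.relIndex (U i) = b at *
      generalize S.relIndex (U j) = b' at *
      generalize (U i).index = a at *
      generalize (U j).index = a' at *
      have hb3 : 3 ≤ b' := by omega
      have ha3 : a' ≤ 3 := by nlinarith
      have ha5 : a ≤ 5 := by nlinarith
      clear hbd' hbound
      generalize S.index = m at *
      interval_cases a' <;> interval_cases a <;>
      · have h4 : m ≤ 11 := h11
        interval_cases m <;> first | omega | norm_num [Nat.factorial]
  · -- only possible for eight points with blocks of size four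
    obtain ⟨k, hk⟩ := hcut (U i ⊓ U j) (le_inf (hS i) (hS j)) hc
    obtain ⟨e, he1, he⟩ := hdrop _ (le_inf (hS i) (hS j)) k hk
    have hkt := hntop _ k hk
    have hbk := himin k hkt
    have hak := ha2 k hkt
    have hmk := hmul k
    have hSS : S.relIndex (U i ⊓ U j ⊓ U k) = 1 ∧ (U i).index = 2 ∧ (U j).index = 2 ∧
        (U k).index = 2 ∧ S.index = 8 := by
      have hc1 : S.relIndex (U i ⊓ U j) ≠ 1 := fun h =>
        hc (le_antisymm (Subgroup.relIndex_eq_one.mp h) (le_inf (hS i) (hS j)))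
      generalize S.relIndex (U i ⊓ U j ⊓ U k) = r at *
      generalize S.relIndex (U i ⊓ U j) = c at *
      generalize S.relIndex (U i) = b at *
      generalize S.relIndex (U j) = b' at *
      generalize S.relIndex (U k) = b'' at *
      generalize (U i).index = a at *
      generalize (U j).index = a' at *
      generalize (U k).index = a'' at *
      generalize S.index = m at *
      have hb5 : b ≤ 5 := by nlinarith
      have hc0 : c ≠ 0 := by rintro rfl; omega
      have hd0 : d ≠ 0 := by rintro rfl; omega
      have hc5 : c ≤ 2 := by
        have : 2 ≤ d := by omega
        nlinarith
      have hc2 : c = 2 := by omega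
      subst hc2
      have he0 : e ≠ 0 := by rintro rfl; omega
      have hr0 : r ≠ 0 := by rintro rfl; omega
      have hr : r = 1 := by
        have : 2 ≤ e := by omega
        nlinarith
      have hb4 : b = 4 := by omega
      subst hb4
      have : a = 2 := by omega
      subst this
      have : m = 8 := by omega
      subst this
      refine ⟨hr, rfl, ?_, ?_, rfl⟩ <;> nlinarith
    obtain ⟨h1, h2, h3, h4, h5⟩ := hSS
    have h6 : U i ⊓ U j ⊓ U k ≤ S := Subgroup.relIndex_eq_one.mp h1
    have h7 : (U i).normalCore ⊓ (U j).normalCore ⊓ (U k).normalCore ≤ S.normalCore :=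
      Subgroup.normal_le_normalCore.mpr ((inf_le_inf (inf_le_inf (U i).normalCore_le
        (U j).normalCore_le) (U k).normalCore_le).trans h6)
    have h8 : S.normalCore.index ≤ (2 * 2) * 2 := by
      refine (index_le_of_subgroup_le h7).trans (Subgroup.index_inf_le.trans
        (Nat.mul_le_mul (Subgroup.index_inf_le.trans (Nat.mul_le_mul ?_ ?_)) ?_))
      · exact (index_normalCore_le_factorial _).trans (by simp [h2])
      · exact (index_normalCore_le_factorial _).trans (by simp [h3])
      · exact (index_normalCore_le_factorial _).trans (by simp [h4])
    have h9 : (S.normalCore.index : ℝ) ≤ ((2 * 2 * 2 : ℕ) : ℝ) := by exact_mod_cast h8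
    rw [h5]
    refine h9.trans ?_
    norm_num

end GroupTheory

/-! ### Orbits of automorphisms and the links between them -/

section Poset

open MulAction

variable {α : Type} [PartialOrder α]

/-- Strict comparability. -/
def Cmp (x y : α) : Prop := x < y ∨ y < x

theorem cmp_map (g : α ≃o α) (x y : α) : Cmp (g x) (g y) ↔ Cmp x y := by
  simp [Cmp]

theorem cmp_map_left (g : α ≃o α) (x y : α) : Cmp (g x) y ↔ Cmp x (g⁻¹ y) := by
  conv_lhs => rw [show y = g (g⁻¹ y) from (g.apply_symm_apply y).symm]
  exact cmp_map g x _

theorem mem_orbit_apply {x y : α} (g : α ≃o α) : g y ∈ orbit (α ≃o α) x ↔ y ∈ orbit (α ≃o α) x := by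
  constructor
  · rintro ⟨h, hh⟩
    exact ⟨g⁻¹ * h, by simp only [mul_smul]; rw [inv_smul_eq_iff]; exact hh⟩
  · rintro ⟨h, rfl⟩
    exact ⟨g * h, mul_smul _ _ _⟩

/-- The pointwise stabilizer of the orbit of `x`, defined as the normal core of the stabilizer of
`x`; see `mem_fixer`. -/
def fixer (x : α) : Subgroup (α ≃o α) := (stabilizer (α ≃o α) x).normalCore

theorem mem_fixer {x : α} {h : α ≃o α} :
    h ∈ fixer x ↔ ∀ y ∈ orbit (α ≃o α) x, h y = y := by
  constructor
  · rintro hh _ ⟨g, rfl⟩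
    have h1 : (g⁻¹ * h * (g⁻¹)⁻¹) • x = x := mem_stabilizer_iff.mp (hh g⁻¹)
    rw [inv_inv, mul_smul, mul_smul, inv_smul_eq_iff] at h1
    exact h1
  · intro hh g
    have h1 := hh (g⁻¹ • x) (mem_orbit x g⁻¹)
    change (g * h * g⁻¹) • x = x
    rw [mul_smul, mul_smul, smul_eq_iff_eq_inv_smul]
    exact h1

theorem fixer_eq_of_mem_orbit {x y : α} (h : y ∈ orbit (α ≃o α) x) : fixer y = fixer x := by
  ext g
  rw [mem_fixer, mem_fixer, orbit_eq_iff.mpr h]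

/-- The automorphisms `g` for which `x` and `g x` are comparable to the same points of the orbit of
`z`. It is the stabilizer of the block of `x`, where two points of the orbit of `x` lie in one block
when they have the same neighbours in the orbit of `z`. It equals `⊤` when the two orbits are
completely joined or completely unrelated, and the stabilizer of `x` when its neighbours in the
orbit of `z` determine `x`. -/
def linkSubgroup (x z : α) : Subgroup (α ≃o α) where
  carrier := {g | ∀ y ∈ orbit (α ≃o α) z, Cmp (g x) y ↔ Cmp x y}
  one_mem' := fun _ _ => Iff.rfl
  mul_mem' := by
    intro g h hg hh y hy
    change Cmp (g (h x)) y ↔ _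
    rw [cmp_map_left, hh _ ((mem_orbit_apply _).mpr hy), ← cmp_map_left, hg y hy]
  inv_mem' := by
    intro g hg y hy
    rw [cmp_map_left, inv_inv, ← hg _ ((mem_orbit_apply _).mpr hy), cmp_map]

theorem stabilizer_le_link (x z : α) : stabilizer (α ≃o α) x ≤ linkSubgroup x z := by
  intro g hg y _
  have : g x = x := hg
  rw [this]

theorem fixer_le_link (x z : α) : fixer z ≤ linkSubgroup x z := by
  intro g hg y hy
  have h1 := mem_fixer.mp (inv_mem hg) y hy
  rw [cmp_map_left, h1]

/-- If points of the orbit of `x` are determined by their neighbours in the orbit of `z`, an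
automorphism fixing the latter orbit pointwise fixes the former pointwise. -/
theorem fixer_le_of_link_eq {x z : α} (h : linkSubgroup x z = stabilizer (α ≃o α) x) :
    fixer z ≤ fixer x := by
  have : (fixer z).Normal := Subgroup.normalCore_normal _
  exact Subgroup.normal_le_normalCore.mpr (h ▸ fixer_le_link x z)

theorem index_stabilizer_eq (x : α) :
    (stabilizer (α ≃o α) x).index = (orbit (α ≃o α) x).ncard := index_stabilizer _ x

variable [Fintype α]

instance finiteAut : Finite (α ≃o α) := DFunLike.finite _

/-- Otherwise `x < g x < g (g x) < ⋯`, which is impossible as `g` has finite order. -/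
theorem not_lt_apply (g : α ≃o α) (x : α) : ¬ x < g x := by
  intro h
  have hk : ∀ k : ℕ, x < (g ^ (k + 1)) x := by
    intro k
    induction k with
    | zero => simpa using h
    | succ k ih =>
      rw [pow_succ']
      exact h.trans (g.lt_iff_lt.mpr ih)
  have := hk (orderOf g - 1)
  rw [Nat.sub_add_cancel (orderOf_pos g), pow_orderOf_eq_one] at this
  exact lt_irrefl _ this

theorem not_lt_of_mem_orbit {x y z : α} (hx : x ∈ orbit (α ≃o α) z) (hy : y ∈ orbit (α ≃o α) z) :
    ¬ x < y := by
  have : y ∈ orbit (α ≃o α) x := by rw [orbit_eq_iff.mpr hx]; exact hy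
  obtain ⟨g, rfl⟩ := this
  exact not_lt_apply g x

/-- Between two given orbits, comparabilities go in one direction only. Hence comparability
`Cmp` between points of two orbits determines the order between them. -/
theorem orbit_direction {a b x x' z z' : α} (hx : x ∈ orbit (α ≃o α) a)
    (hx' : x' ∈ orbit (α ≃o α) a) (hz : z ∈ orbit (α ≃o α) b) (hz' : z' ∈ orbit (α ≃o α) b)
    (h : x < z) : ¬ z' < x' := by
  intro h'
  have : z' ∈ orbit (α ≃o α) z := by rw [orbit_eq_iff.mpr hz]; exact hz'
  obtain ⟨g, rfl⟩ := this
  have h1 : g x < g z := g.lt_iff_lt.mpr h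
  exact not_lt_of_mem_orbit ((mem_orbit_apply g).mpr hx) hx' (h1.trans h')

theorem link_self {x z : α} (h : z ∈ orbit (α ≃o α) x) : linkSubgroup x z = ⊤ := by
  rw [eq_top_iff]
  intro g _ y hy
  rw [orbit_eq_iff.mpr h] at hy
  have hgx : g x ∈ orbit (α ≃o α) x := mem_orbit x g
  have hx : x ∈ orbit (α ≃o α) x := mem_orbit_self x
  have h1 := not_lt_of_mem_orbit hgx hy
  have h2 := not_lt_of_mem_orbit hy hgx
  have h3 := not_lt_of_mem_orbit hx hy
  have h4 := not_lt_of_mem_orbit hy hx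
  simp [Cmp, *]

/-- The orbit of `x` is collapsible if some endomorphism that moves at most 22 points identifies two
points of it. The constant is twice the width bound, which leaves room to move two orbits. -/
def Collapsible (x : α) : Prop :=
  ∃ (f : α → α) (D : Finset α), Monotone f ∧ D.card ≤ 22 ∧ (∀ y ∉ D, f y = y) ∧
    ∃ y ∈ orbit (α ≃o α) x, ∃ y' ∈ orbit (α ≃o α) x, y ≠ y' ∧ f y = f y'

/-- In an orbit that is not collapsible no two points have the same neighbours: sending one of two
such points to the other and fixing the rest of the order is an endomorphism. -/
theorem iInf_link_le {x : α} (hx : ¬ Collapsible x) :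
    ⨅ z, linkSubgroup x z ≤ stabilizer (α ≃o α) x := by
  classical
  intro g hg
  by_contra hgx
  have hne : g x ≠ x := hgx
  have hcmp : ∀ y, Cmp (g x) y ↔ Cmp x y := fun y =>
    Subgroup.mem_iInf.mp hg y y (mem_orbit_self y)
  have hx0 : x ∈ orbit (α ≃o α) x := mem_orbit_self x
  have hgx0 : g x ∈ orbit (α ≃o α) x := mem_orbit x g
  refine hx ⟨Function.update id x (g x), {x}, ?_, by simp, ?_, x, hx0, g x, hgx0, hne.symm, ?_⟩
  · intro p q hpq
    rcases hpq.eq_or_lt with rfl | hlt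
    · rfl
    by_cases hp : p = x
    · subst hp
      rw [Function.update_self, Function.update_of_ne hlt.ne']
      rcases (hcmp q).mpr (Or.inl hlt) with h | h
      · exact h.le
      · exact absurd (hlt.trans h) (not_lt_of_mem_orbit hx0 hgx0)
    · rw [Function.update_of_ne hp]
      by_cases hq : q = x
      · subst hq
        rw [Function.update_self]
        rcases (hcmp p).mpr (Or.inr hlt) with h | h
        · exact absurd (h.trans hlt) (not_lt_of_mem_orbit hgx0 hx0)
        · exact h.le
      · rw [Function.update_of_ne hq]
        exact hpq
  · intro y hy
    rw [Function.update_of_ne (by simpa using hy)]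
    rfl
  · rw [Function.update_self, Function.update_of_ne hne]
    rfl

/-- If the orbits of `x` and `q` are completely joined or unrelated, then every point `p` of the orbit
of `x` may be replaced by `x` in comparisons with `q`. -/
theorem lt_of_link_top {x p q : α} (hp : p ∈ orbit (α ≃o α) x) (h : linkSubgroup x q = ⊤) :
    (p < q → x < q) ∧ (q < p → q < x) := by
  obtain ⟨g, rfl⟩ := hp
  have hg : Cmp (g x) q ↔ Cmp x q :=
    (show g ∈ linkSubgroup x q from h ▸ Subgroup.mem_top g) q (mem_orbit_self q)
  have hx : x ∈ orbit (α ≃o α) x := mem_orbit_self x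
  have hgx : g x ∈ orbit (α ≃o α) x := mem_orbit x g
  change (g x < q → _) ∧ (q < g x → _)
  constructor
  · intro h1
    rcases hg.mp (Or.inl h1) with h2 | h2
    · exact h2
    · exact absurd (h1.trans h2) (not_lt_of_mem_orbit hgx hx)
  · intro h1
    rcases hg.mp (Or.inr h1) with h2 | h2
    · exact absurd (h2.trans h1) (not_lt_of_mem_orbit hx hgx)
    · exact h2

/-- Two orbits that are linked to each other but not to anything else can be collapsed: choose a
comparable pair of points, one in each orbit, and send each orbit to its chosen point. -/
theorem collapsible_of_isolated_pair {x z : α} (hw : ∀ y : α, (orbit (α ≃o α) y).ncard ≤ 11)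
    (hx : stabilizer (α ≃o α) x ≠ ⊤) (hxz : linkSubgroup x z ≠ ⊤)
    (hiso : ∀ y, y ∉ orbit (α ≃o α) x → y ∉ orbit (α ≃o α) z →
      linkSubgroup x y = ⊤ ∧ linkSubgroup z y = ⊤) : Collapsible x := by
  classical
  -- a point of the orbit of `z` comparable to `x`
  obtain ⟨z', hz', hcmp⟩ : ∃ z' ∈ orbit (α ≃o α) z, Cmp x z' := by
    by_contra! hno
    apply hxz
    rw [eq_top_iff]
    intro g _ y hy
    have h1 := hno y hy
    have h2 := hno _ ((mem_orbit_apply g⁻¹).mpr hy)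
    rw [cmp_map_left]
    tauto
  have hzx : z' ∉ orbit (α ≃o α) x := fun h => by
    rcases hcmp with h1 | h1
    · exact not_lt_of_mem_orbit (mem_orbit_self x) h h1
    · exact not_lt_of_mem_orbit h (mem_orbit_self x) h1
  have horb : orbit (α ≃o α) z' = orbit (α ≃o α) z := orbit_eq_iff.mpr hz'
  have hdisj : ∀ p, p ∈ orbit (α ≃o α) x → p ∉ orbit (α ≃o α) z := by
    intro p hp hpz
    apply hzx
    rw [← orbit_eq_iff.mpr hp, orbit_eq_iff.mpr hpz]
    exact hz'
  have hlinkz : ∀ y, linkSubgroup z y = ⊤ → linkSubgroup z' y = ⊤ := by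
    intro y hy
    obtain ⟨g, rfl⟩ := hz'
    rw [eq_top_iff]
    intro h _ p hp
    have h1 : ∀ k : α ≃o α, Cmp (k z) p ↔ Cmp z p := fun k =>
      (show k ∈ linkSubgroup z y from hy ▸ Subgroup.mem_top k) p hp
    change Cmp ((h * g) z) p ↔ Cmp (g z) p
    rw [h1, h1]
  have hx0 : x ∈ orbit (α ≃o α) x := mem_orbit_self x
  let f : α → α := fun p =>
    if p ∈ orbit (α ≃o α) x then x else if p ∈ orbit (α ≃o α) z then z' else p
  have fx : ∀ p, p ∈ orbit (α ≃o α) x → f p = x := fun p hp => if_pos hp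
  have fz : ∀ p, p ∈ orbit (α ≃o α) z → f p = z' := fun p hp => by
    simp only [f]
    rw [if_neg (fun h => hdisj p h hp), if_pos hp]
  have fo : ∀ p, p ∉ orbit (α ≃o α) x → p ∉ orbit (α ≃o α) z → f p = p := fun p hp hp' => by
    simp only [f]
    rw [if_neg hp, if_neg hp']
  refine ⟨f, (orbit (α ≃o α) x ∪ orbit (α ≃o α) z).toFinset, ?_, ?_, ?_, ?_⟩
  · intro p q hpq
    rcases hpq.eq_or_lt with rfl | hlt
    · rfl
    by_cases hp : p ∈ orbit (α ≃o α) x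
    · rw [fx p hp]
      by_cases hq : q ∈ orbit (α ≃o α) x
      · rw [fx q hq]
      by_cases hq' : q ∈ orbit (α ≃o α) z
      · rw [fz q hq']
        rcases hcmp with h | h
        · exact h.le
        · exact absurd h (orbit_direction hp hx0 hq' hz' hlt)
      · rw [fo q hq hq']
        exact ((lt_of_link_top hp (hiso q hq hq').1).1 hlt).le
    by_cases hp' : p ∈ orbit (α ≃o α) z
    · rw [fz p hp']
      by_cases hq : q ∈ orbit (α ≃o α) x
      · rw [fx q hq]
        rcases hcmp with h | h
        · exact absurd h (orbit_direction hp' hz' hq hx0 hlt)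
        · exact h.le
      by_cases hq' : q ∈ orbit (α ≃o α) z
      · rw [fz q hq']
      · rw [fo q hq hq']
        exact ((lt_of_link_top (horb ▸ hp') (hlinkz q (hiso q hq hq').2)).1 hlt).le
    · rw [fo p hp hp']
      by_cases hq : q ∈ orbit (α ≃o α) x
      · rw [fx q hq]
        exact ((lt_of_link_top hq (hiso p hp hp').1).2 hlt).le
      by_cases hq' : q ∈ orbit (α ≃o α) z
      · rw [fz q hq']
        exact ((lt_of_link_top (horb ▸ hq') (hlinkz p (hiso p hp hp').2)).2 hlt).le
      · rw [fo q hq hq']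
        exact hpq
  · rw [← Set.ncard_eq_toFinset_card']
    have h1 := Set.ncard_union_le (orbit (α ≃o α) x) (orbit (α ≃o α) z)
    have h2 := hw x
    have h3 := hw z
    omega
  · intro y hy
    rw [Set.mem_toFinset, Set.mem_union, not_or] at hy
    exact fo y hy.1 hy.2
  · obtain ⟨g, hg⟩ : ∃ g : α ≃o α, g x ≠ x := by
      by_contra! h
      exact hx (eq_top_iff.mpr fun g _ => h g)
    have hgx : g x ∈ orbit (α ≃o α) x := mem_orbit x g
    exact ⟨g x, hgx, x, hx0, hg, by rw [fx _ hgx, fx _ hx0]⟩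

theorem factorial_le_two {m : ℕ} (h : m ≤ 8) : (m.factorial : ℝ) ≤ (39 / 20 : ℝ) ^ (2 * m) := by
  interval_cases m <;> norm_num [Nat.factorial]

theorem factorial_le_three {m : ℕ} (h : m ≤ 11) : (m.factorial : ℝ) ≤ (39 / 20 : ℝ) ^ (3 * m) := by
  interval_cases m <;> norm_num [Nat.factorial]

theorem index_fixer_le (x : α) : (fixer x).index ≤ (orbit (α ≃o α) x).ncard.factorial := by
  rw [← index_stabilizer_eq]
  exact index_normalCore_le_factorial _

/-- The key estimate. Let `H` be minimal among the subgroups `fixer x`, and suppose that no orbit in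
the class `{x | fixer x = H}` is collapsible. Then `H` has index at most `(39 / 20) ^ c`, where `c` is
the number of points of the class. -/
theorem class_bound (hw : ∀ y : α, (orbit (α ≃o α) y).ncard ≤ 11) {H : Subgroup (α ≃o α)}
    (hne : ∃ x : α, fixer x = H) (hmin : ∀ x : α, fixer x ≤ H → fixer x = H)
    (hcol : ∀ x : α, fixer x = H → ¬ Collapsible x) :
    (H.index : ℝ) ≤ (39 / 20 : ℝ) ^ {x : α | fixer x = H}.ncard := by
  classical
  set T := {x : α | fixer x = H} with hT
  have hpow : ∀ {a b : ℕ}, a ≤ b → (39 / 20 : ℝ) ^ a ≤ (39 / 20 : ℝ) ^ b := fun h =>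
    pow_le_pow_right₀ (by norm_num) h
  have hsub : ∀ x ∈ T, orbit (α ≃o α) x ⊆ T := fun x hx y hy =>
    (fixer_eq_of_mem_orbit hy).trans hx
  have hcard : ∀ s : Set α, s ⊆ T → s.ncard ≤ T.ncard := fun s hs => Set.ncard_le_ncard hs
  by_cases hl : ∃ x ∈ T, ∀ z, linkSubgroup x z ≠ stabilizer (α ≃o α) x
  · obtain ⟨x, hx, hz⟩ := hl
    have h1 := index_light (fun z => linkSubgroup x z) (fun z => stabilizer_le_link x z) hz
      (iInf_link_le (hcol x hx)) (by rw [index_stabilizer_eq]; exact hw x)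
    rw [index_stabilizer_eq] at h1
    have h2 : (stabilizer (α ≃o α) x).normalCore = H := hx
    rw [h2] at h1
    exact h1.trans (hpow (hcard _ (hsub x hx)))
  push Not at hl
  -- From here on the points of each orbit of the class are determined by their neighbours in one
  -- further orbit, which again lies in the class by minimality of `H`.
  by_cases ht : ∃ x ∈ T, stabilizer (α ≃o α) x = ⊤
  · obtain ⟨x, hx, hst⟩ := ht
    have h1 := index_fixer_le x
    have h2 := index_stabilizer_eq x
    rw [hst, Subgroup.index_top] at h2
    rw [← h2, show fixer x = H from hx] at h1
    have h3 : (H.index : ℝ) ≤ 1 := by exact_mod_cast h1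
    exact h3.trans (one_le_pow₀ (by norm_num))
  push Not at ht
  -- an orbit of least size in the class
  obtain ⟨x, hx, hxmin⟩ : ∃ x ∈ T, ∀ y ∈ T,
      (orbit (α ≃o α) x).ncard ≤ (orbit (α ≃o α) y).ncard :=
    Set.exists_min_image T _ T.toFinite hne
  obtain ⟨z, hz⟩ := hl x hx
  have hxz : linkSubgroup x z ≠ ⊤ := hz ▸ ht x hx
  have hzT : z ∈ T := hmin z ((fixer_le_of_link_eq hz).trans (le_of_eq hx))
  have hdis : ∀ {y y' : α}, y' ∉ orbit (α ≃o α) y →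
      Disjoint (orbit (α ≃o α) y) (orbit (α ≃o α) y') := by
    intro y y' h
    rw [Set.disjoint_left]
    intro p hp hp'
    apply h
    rw [← orbit_eq_iff.mpr hp, orbit_eq_iff.mpr hp']
    exact mem_orbit_self y'
  have hzx : z ∉ orbit (α ≃o α) x := fun h => hxz (link_self h)
  have hTx := hxmin z hzT
  have hcup : (orbit (α ≃o α) x ∪ orbit (α ≃o α) z).ncard =
      (orbit (α ≃o α) x).ncard + (orbit (α ≃o α) z).ncard := Set.ncard_union_eq (hdis hzx)
  have hcupT := hcard _ (Set.union_subset (hsub x hx) (hsub z hzT))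
  have hHx : (H.index : ℝ) ≤ ((orbit (α ≃o α) x).ncard.factorial : ℝ) := by
    have h1 := index_fixer_le x
    rw [show fixer x = H from hx] at h1
    exact_mod_cast h1
  by_cases h8 : (orbit (α ≃o α) x).ncard ≤ 8
  · exact hHx.trans ((factorial_le_two h8).trans (hpow (by omega)))
  by_cases h3 : ∃ y ∈ T, y ∉ orbit (α ≃o α) x ∧ y ∉ orbit (α ≃o α) z
  · obtain ⟨y, hy, hyx, hyz⟩ := h3
    have h4 := hxmin y hy
    have h5 : (orbit (α ≃o α) x ∪ orbit (α ≃o α) z ∪ orbit (α ≃o α) y).ncard =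
        (orbit (α ≃o α) x ∪ orbit (α ≃o α) z).ncard + (orbit (α ≃o α) y).ncard :=
      Set.ncard_union_eq (Set.disjoint_union_left.mpr ⟨hdis hyx, hdis hyz⟩)
    have h6 := hcard _ (Set.union_subset (Set.union_subset (hsub x hx) (hsub z hzT)) (hsub y hy))
    exact hHx.trans ((factorial_le_three (hw x)).trans (hpow (by omega)))
  -- The class consists of the two orbits of `x` and `z`, of at least nine points each. As they are
  -- not collapsible, one of them is linked to an orbit outside the class and hence is imprimitive.
  push Not at h3
  obtain ⟨y, hyx, hyz, hy⟩ : ∃ y, y ∉ orbit (α ≃o α) x ∧ y ∉ orbit (α ≃o α) z ∧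
      (linkSubgroup x y = ⊤ → linkSubgroup z y ≠ ⊤) := by
    by_contra! hno
    exact hcol x hx (collapsible_of_isolated_pair hw (ht x hx) hxz hno)
  have hyT : y ∉ T := fun h => hyz (h3 y h hyx)
  have key : ∀ v ∈ T, linkSubgroup v y ≠ ⊤ →
      (H.index : ℝ) ≤ (39 / 20 : ℝ) ^ T.ncard := by
    intro v hv hvy
    have hne' : linkSubgroup v y ≠ stabilizer (α ≃o α) v := fun h =>
      hyT (hmin y ((fixer_le_of_link_eq h).trans (le_of_eq hv)))
    have h4 := hxmin v hv
    have h5 := index_normalCore_imprimitive_le (stabilizer_le_link v y) hne' hvy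
      (by rw [index_stabilizer_eq]; omega) (by rw [index_stabilizer_eq]; exact hw v)
    have h6 : (stabilizer (α ≃o α) v).normalCore = H := hv
    rw [h6] at h5
    have h7 : (H.index : ℝ) ≤ 100000 := by exact_mod_cast h5
    have h8 : (100000 : ℝ) ≤ (39 / 20 : ℝ) ^ 18 := by norm_num
    exact h7.trans (h8.trans (hpow (by omega)))
  by_cases hxy : linkSubgroup x y = ⊤
  · exact key z hzT (hy hxy)
  · exact key x hx hxy

end Poset

/-! ### Counting endomorphisms and automorphisms -/

section Counting

open MulAction

variable {α : Type} [Fintype α] [PartialOrder α]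

theorem card_agree_off_le (D : Finset α) (g₀ : α ≃o α) :
    Nat.card {g : α ≃o α // ∀ y ∉ D, g y = g₀ y} ≤ D.card.factorial := by
  classical
  have h1 : Nat.card {σ : Equiv.Perm α // ∀ a, ¬ a ∈ D → σ a = a} = D.card.factorial := by
    rw [← Nat.card_congr (Equiv.Perm.subtypeEquivSubtypePerm (fun a => a ∈ D)), Nat.card_perm]
    simp
  rw [← h1]
  refine Nat.card_le_card_of_injective
    (fun g => ⟨(g.1.trans g₀.symm).toEquiv, fun a ha => ?_⟩) ?_
  · simp [g.2 a ha]
  · intro g g' h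
    apply Subtype.ext
    ext a
    have h2 := congrArg (fun σ => σ.1 a) h
    simpa using h2

/-- Compose each automorphism with a collapsing endomorphism of each of the orbits represented in `X`.
A product determines the automorphism off a set of 22 points once the orbit is known; and all orbits
that occur for one product meet a common set of 22 points, since off the set moved by one collapsing
map the product is injective. So each product arises at most `22! * 22` times. -/
theorem local_count (X : Finset α) (hX : ∀ x ∈ X, Collapsible x)
    (hinj : ∀ x ∈ X, ∀ y ∈ X, y ∈ orbit (α ≃o α) x → x = y) :
    X.card * Nat.card (α ≃o α) ≤
      (Nat.factorial 22 * 22) * Set.ncard {f : α → α | Monotone f} := by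
  classical
  have : Fintype (α ≃o α) := Fintype.ofFinite _
  choose! f D hmono hD hoff y hy y' hy' hne heq using hX
  rw [Nat.card_eq_fintype_card, ← Finset.card_univ, ← Finset.card_product,
    Set.ncard_eq_toFinset_card']
  refine Finset.card_le_mul_card_image_of_maps_to
    (f := fun p : α × (α ≃o α) => (fun a => p.2 (f p.1 a))) ?_ _ ?_
  · rintro ⟨x, g⟩ hp
    rw [Finset.mem_product] at hp
    simp only [Set.mem_toFinset, Set.mem_ofPred_eq]
    exact g.monotone.comp (hmono x hp.1)
  intro h _
  set F := (X ×ˢ (Finset.univ : Finset (α ≃o α))).filter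
    (fun p => (fun a => p.2 (f p.1 a)) = h) with hF
  have memF : ∀ p, p ∈ F ↔ p.1 ∈ X ∧ ∀ a, p.2 (f p.1 a) = h a := by
    intro p
    simp [hF, Finset.mem_filter, Finset.mem_product, funext_iff]
  have h1 : F.card ≤ Nat.factorial 22 * (F.image Prod.fst).card := by
    refine Finset.card_le_mul_card_image F _ ?_
    intro x hx
    obtain ⟨⟨x', g₀⟩, hp, rfl⟩ := Finset.mem_image.mp hx
    have hp' := (memF _).mp hp
    refine le_trans ?_ ((card_agree_off_le (D x') g₀).trans (Nat.factorial_le (hD x' hp'.1)))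
    rw [Nat.card_eq_fintype_card, Fintype.card_subtype]
    refine Finset.card_le_card_of_injOn Prod.snd ?_ ?_
    · rintro ⟨u, g⟩ hu
      simp only [Finset.coe_filter, Set.mem_ofPred_eq] at hu
      obtain ⟨hu1, rfl⟩ := hu
      have hu' := (memF _).mp hu1
      simp only [Finset.coe_filter, Finset.mem_univ, true_and, Set.mem_ofPred_eq]
      intro a ha
      have e1 := hu'.2 a
      have e2 := hp'.2 a
      simp only [hoff _ hp'.1 a ha] at e1 e2
      rw [e1, e2]
    · rintro ⟨u, g⟩ hu ⟨u', g'⟩ hu' hgg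
      simp only [Finset.coe_filter, Set.mem_ofPred_eq] at hu hu'
      obtain ⟨_, rfl⟩ := hu
      obtain ⟨_, rfl⟩ := hu'
      exact Prod.ext rfl hgg
  refine h1.trans (Nat.mul_le_mul_left _ ?_)
  by_cases hemp : F = ∅
  · simp [hemp]
  obtain ⟨⟨x₀, g₀⟩, hp₀⟩ := Finset.nonempty_iff_ne_empty.mpr hemp
  have hp₀' := (memF _).mp hp₀
  -- every orbit occurring in the fibre meets `D x₀`
  have hmeet : ∀ x ∈ F.image Prod.fst, ∃ d ∈ D x₀, d ∈ orbit (α ≃o α) x := by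
    intro x hx
    obtain ⟨⟨x', g⟩, hp, rfl⟩ := Finset.mem_image.mp hx
    have hp' := (memF _).mp hp
    by_contra! hno
    have e : h (y x') = h (y' x') := by
      rw [← hp'.2, ← hp'.2]
      simp only [heq x' hp'.1]
    rw [← hp₀'.2, ← hp₀'.2] at e
    have e' := g₀.injective e
    have n1 : y x' ∉ D x₀ := fun hd => hno _ hd (hy x' hp'.1)
    have n2 : y' x' ∉ D x₀ := fun hd => hno _ hd (hy' x' hp'.1)
    simp only [hoff _ hp₀'.1 _ n1, hoff _ hp₀'.1 _ n2] at e'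
    exact hne x' hp'.1 e'
  choose! d hd hd' using hmeet
  refine le_trans (Finset.card_le_card_of_injOn d (fun x hx => hd x hx) ?_) (hD x₀ hp₀'.1)
  intro x hx x' hx' hdd
  have hxX : ∀ u ∈ F.image Prod.fst, u ∈ X := by
    intro u hu
    obtain ⟨p, hp, rfl⟩ := Finset.mem_image.mp hu
    exact ((memF _).mp hp).1
  refine hinj x (hxX x hx) x' (hxX x' hx') ?_
  rw [← orbit_eq_iff.mpr (hd' x hx), show d x = d x' from hdd, orbit_eq_iff.mpr (hd' x' hx')]
  exact mem_orbit_self x'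

/-- Let `c 0 < c 1 < ⋯ < c H` be a longest chain. Every map that sends each point `x` of height `h` to
either `c h` or `c (h + 1)` is order preserving, and for `h < H` the two choices differ. The points
of height `H` form an antichain, so at most 11 points have no choice. -/
theorem two_pow_le_card_end (hw : ∀ s : Set α, IsAntichain (· ≤ ·) s → s.ncard ≤ 11) :
    2 ^ (Fintype.card α - 11) ≤ Set.ncard {f : α → α | Monotone f} := by
  classical
  rcases isEmpty_or_nonempty α with hα | hα
  · have h0 : Fintype.card α - 11 = 0 := by simp
    rw [h0, pow_zero]
    exact (Set.ncard_pos (Set.toFinite _)).mpr ⟨id, monotone_id⟩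
  have hfin : ∀ x : α, Order.height x ≠ ⊤ := by
    intro x hx
    have h1 : Order.height x ≤ (Fintype.card α : ℕ∞) :=
      Order.height_le fun p _ => by exact_mod_cast p.length_lt_card.le
    rw [hx] at h1
    exact absurd h1 (by simp)
  choose ht hht using fun x : α => ENat.ne_top_iff_exists.mp (hfin x)
  have hlt : ∀ x y : α, x < y → ht x + 1 ≤ ht y := by
    intro x y hxy
    have h1 := Order.height_add_one_le hxy
    rw [← hht x, ← hht y] at h1
    exact_mod_cast h1
  obtain ⟨x₀, hx₀⟩ := Finite.exists_max ht
  obtain ⟨p, -, hp⟩ := Order.exists_series_of_height_eq_coe x₀ (hht x₀).symm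
  set H := ht x₀ with hH
  let c : ℕ → α := fun i => p ⟨min i p.length, by omega⟩
  have hcm : Monotone c := by
    intro i j hij
    apply p.strictMono.monotone
    simp only [Fin.mk_le_mk]
    omega
  have hcinj : ∀ i, i < H → c i ≠ c (i + 1) := by
    intro i hi
    apply ne_of_lt
    apply p.strictMono
    simp only [Fin.mk_lt_mk]
    omega
  -- `F s` sends the points of `s` one step higher in the chain
  let F : Finset α → α → α := fun s x => c (ht x + if x ∈ s then 1 else 0)
  have hFm : ∀ s, Monotone (F s) := by
    intro s x y hxy
    rcases hxy.eq_or_lt with rfl | h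
    · rfl
    apply hcm
    have := hlt x y h
    split_ifs <;> omega
  let A : Finset α := Finset.univ.filter (fun x => ht x < H)
  have hFinj : ∀ s ∈ A.powerset, ∀ t ∈ A.powerset, F s = F t → s ⊆ t := by
    intro s hs t _ hst x hxs
    by_contra hxt
    have hxA : ht x < H := (Finset.mem_filter.mp (Finset.mem_powerset.mp hs hxs)).2
    have h1 := congrFun hst x
    simp only [F, if_pos hxs, if_neg hxt, add_zero] at h1
    exact hcinj _ hxA h1.symm
  have hA : Fintype.card α - 11 ≤ A.card := by
    have h1 := Finset.card_filter_add_card_filter_not (s := (Finset.univ : Finset α))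
      (fun x => ht x < H)
    have h2 := hw ((Finset.univ.filter (fun x : α => ¬ ht x < H) : Finset α) : Set α) (by
      intro x hx y hy hne hle
      have h3 := hlt x y (lt_of_le_of_ne hle hne)
      simp only [Finset.coe_filter, Finset.mem_univ, true_and, Set.mem_ofPred_eq] at hx hy
      have := hx₀ y
      omega)
    rw [Set.ncard_coe_finset] at h2
    rw [Finset.card_univ] at h1
    have h4 : A.card = (Finset.univ.filter (fun x : α => ht x < H)).card := rfl
    omega
  calc 2 ^ (Fintype.card α - 11) ≤ 2 ^ A.card := Nat.pow_le_pow_right (by norm_num) hA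
    _ = A.powerset.card := (Finset.card_powerset A).symm
    _ ≤ Set.ncard {f : α → α | Monotone f} := by
      rw [Set.ncard_eq_toFinset_card']
      refine Finset.card_le_card_of_injOn F (fun s _ => by simpa using hFm s) ?_
      intro s hs t ht' hst
      exact Finset.Subset.antisymm (hFinj s hs t ht' hst) (hFinj t ht' s hs hst.symm)

theorem orbit_ncard_le (hw : ∀ s : Set α, IsAntichain (· ≤ ·) s → s.ncard ≤ 11) (x : α) :
    (orbit (α ≃o α) x).ncard ≤ 11 :=
  hw _ fun _ hy _ hz hne hle => not_lt_of_mem_orbit hy hz (lt_of_le_of_ne hle hne)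

/-- With `X` a system of representatives of some collapsible orbits, the number of automorphisms is
at most `(11!) ^ |X| * (39 / 20) ^ |α|`. The minimal subgroups `fixer x` intersect trivially, so their
indices multiply up to at least `|Aut|`; `X` has one point for each of those whose class contains a
collapsible orbit, and `class_bound` handles the others. -/
theorem card_aut_le (hw : ∀ s : Set α, IsAntichain (· ≤ ·) s → s.ncard ≤ 11) :
    ∃ X : Finset α, (∀ x ∈ X, Collapsible x) ∧
      (∀ x ∈ X, ∀ y ∈ X, y ∈ orbit (α ≃o α) x → x = y) ∧
      (Nat.card (α ≃o α) : ℝ) ≤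
        (Nat.factorial 11 : ℝ) ^ X.card * (39 / 20 : ℝ) ^ Fintype.card α := by
  classical
  rcases isEmpty_or_nonempty α with hα | hα
  · have h1 : Nat.card (α ≃o α) ≤ 1 :=
      Finite.card_le_one_iff_subsingleton.mpr ⟨fun g h => by ext x; exact hα.elim x⟩
    refine ⟨∅, by simp, by simp, ?_⟩
    simpa using h1
  have ho := orbit_ncard_le hw
  let R : Finset (Subgroup (α ≃o α)) := Finset.univ.image (fixer (α := α))
  let M : Finset (Subgroup (α ≃o α)) := R.filter (fun H => Minimal (· ∈ R) H)
  let B : Finset (Subgroup (α ≃o α)) := M.filter (fun H => ∃ x : α, fixer x = H ∧ Collapsible x)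
  have hB : ∀ H ∈ B, ∃ x : α, fixer x = H ∧ Collapsible x := fun H hH => (Finset.mem_filter.mp hH).2
  choose! r hr hrc using hB
  have hrinj : Set.InjOn r (B : Set (Subgroup (α ≃o α))) := by
    intro H hH H' hH' h
    rw [← hr H hH, ← hr H' hH', h]
  have hM : ∀ H ∈ M, (∃ x : α, fixer x = H) ∧ ∀ x : α, fixer x ≤ H → fixer x = H := by
    intro H hH
    obtain ⟨h1, h2⟩ := Finset.mem_filter.mp hH
    obtain ⟨x, -, hx⟩ := Finset.mem_image.mp h1
    refine ⟨⟨x, hx⟩, fun y hy => le_antisymm hy (h2.2 ?_ hy)⟩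
    exact Finset.mem_image_of_mem _ (Finset.mem_univ y)
  refine ⟨B.image r, ?_, ?_, ?_⟩
  · intro x hx
    obtain ⟨H, hH, rfl⟩ := Finset.mem_image.mp hx
    exact hrc H hH
  · intro x hx y hy hxy
    obtain ⟨H, hH, rfl⟩ := Finset.mem_image.mp hx
    obtain ⟨H', hH', rfl⟩ := Finset.mem_image.mp hy
    have := fixer_eq_of_mem_orbit hxy
    rw [hr H hH, hr H' hH'] at this
    rw [this]
  rw [Finset.card_image_of_injOn hrinj]
  -- the minimal pointwise stabilizers intersect trivially
  have hbot : (⨅ H : M, (H : Subgroup (α ≃o α))) = ⊥ := by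
    rw [eq_bot_iff]
    intro g hg
    rw [Subgroup.mem_bot]
    ext x
    obtain ⟨H, hHx, hHmin⟩ := Finset.exists_le_minimal R
      (Finset.mem_image_of_mem fixer (Finset.mem_univ x))
    have hHM : H ∈ M := Finset.mem_filter.mpr ⟨hHmin.1, hHmin⟩
    have h1 : g ∈ H := Subgroup.mem_iInf.mp hg ⟨H, hHM⟩
    exact mem_fixer.mp (hHx h1) x (mem_orbit_self x)
  have hcard : Nat.card (α ≃o α) ≤ ∏ H ∈ M, H.index := by
    rw [← Subgroup.index_bot, ← hbot]
    refine (Subgroup.index_iInf_le _).trans (le_of_eq ?_)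
    exact Finset.prod_coe_sort M (fun H => H.index)
  have hcard' : (Nat.card (α ≃o α) : ℝ) ≤ ∏ H ∈ M, (H.index : ℝ) := by exact_mod_cast hcard
  have hone : (1 : ℝ) ≤ (Nat.factorial 11 : ℝ) := by exact_mod_cast Nat.factorial_pos 11
  have heach : ∀ H ∈ M, (H.index : ℝ) ≤ (if H ∈ B then (Nat.factorial 11 : ℝ) else 1) *
      (39 / 20 : ℝ) ^ {x : α | fixer x = H}.ncard := by
    intro H hH
    obtain ⟨⟨x, hx⟩, hmin⟩ := hM H hH
    split_ifs with hHB
    · have h1 : H.index ≤ Nat.factorial 11 := by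
        rw [← hx]
        exact (index_fixer_le x).trans (Nat.factorial_le (ho x))
      have h2 : (H.index : ℝ) ≤ (Nat.factorial 11 : ℝ) := by exact_mod_cast h1
      exact h2.trans (le_mul_of_one_le_right (by positivity) (one_le_pow₀ (by norm_num)))
    · rw [one_mul]
      refine class_bound ho ⟨x, hx⟩ hmin fun y hy hc => hHB ?_
      exact Finset.mem_filter.mpr ⟨hH, y, hy, hc⟩
  have hsum : ∑ H ∈ M, {x : α | fixer x = H}.ncard ≤ Fintype.card α := by
    have h1 : ∀ H : Subgroup (α ≃o α), {x : α | fixer x = H}.ncard =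
        (Finset.univ.filter (fun x : α => fixer x = H)).card := by
      intro H
      rw [Set.ncard_eq_toFinset_card']
      congr 1
      ext x
      simp
    simp only [h1]
    rw [← Finset.card_biUnion]
    · exact Finset.card_le_univ _
    · intro H _ H' _ hne
      rw [Function.onFun, Finset.disjoint_left]
      intro x hx hx'
      exact hne ((Finset.mem_filter.mp hx).2.symm.trans (Finset.mem_filter.mp hx').2)
  calc (Nat.card (α ≃o α) : ℝ) ≤ ∏ H ∈ M, (H.index : ℝ) := hcard'
    _ ≤ ∏ H ∈ M, ((if H ∈ B then (Nat.factorial 11 : ℝ) else 1) *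
          (39 / 20 : ℝ) ^ {x : α | fixer x = H}.ncard) :=
        Finset.prod_le_prod (fun _ _ => by positivity) heach
    _ = (Nat.factorial 11 : ℝ) ^ B.card *
          (39 / 20 : ℝ) ^ ∑ H ∈ M, {x : α | fixer x = H}.ncard := by
        rw [Finset.prod_mul_distrib, Finset.prod_pow_eq_pow_sum, Finset.prod_ite_mem,
          Finset.prod_const, Finset.inter_eq_right.mpr (Finset.filter_subset _ M)]
    _ ≤ (Nat.factorial 11 : ℝ) ^ B.card * (39 / 20 : ℝ) ^ Fintype.card α := by
        gcongr
        norm_num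

end Counting

/-- The Automorphism Conjecture holds for ordered sets of width at
most 11: for every `ε > 0` there is `N` such that every finite ordered set with at
least `N` elements and width `≤ 11` satisfies `|Aut(P)| < ε · |End(P)|`. -/
theorem stmt19 :
    ∀ ε : ℝ, 0 < ε → ∃ N : ℕ, ∀ (α : Type) [Fintype α] [PartialOrder α],
      N ≤ Fintype.card α →
      (∀ s : Set α, IsAntichain (· ≤ ·) s → s.ncard ≤ 11) →
      (Nat.card (α ≃o α) : ℝ) < ε * (Set.ncard {f : α → α | Monotone f} : ℝ) := by
  intro ε hε
  -- `m` collapsible orbits suffice for the bound by `local_count`; with fewer of them, `card_aut_le`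
  -- and `39 / 20 < 2` give the bound for large sets.
  obtain ⟨m, hm⟩ := exists_nat_gt (((Nat.factorial 22 * 22 : ℕ) : ℝ) / ε)
  set L : ℝ := (Nat.factorial 11 : ℝ) ^ m * 2 ^ 11 with hL
  obtain ⟨N, hN⟩ := pow_unbounded_of_one_lt (L / ε) (show (1 : ℝ) < 40 / 39 by norm_num)
  refine ⟨N + 11, fun α _ _ hn hw => ?_⟩
  set n := Fintype.card α with hndef
  have hE : (2 : ℝ) ^ (n - 11) ≤ (Set.ncard {f : α → α | Monotone f} : ℝ) := by
    exact_mod_cast two_pow_le_card_end hw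
  have hEpos : (0 : ℝ) < (Set.ncard {f : α → α | Monotone f} : ℝ) :=
    lt_of_lt_of_le (by positivity) hE
  obtain ⟨X, hX, hinj, hG⟩ := card_aut_le hw
  rcases le_or_gt m X.card with hmX | hmX
  · have h1 : (X.card : ℝ) * (Nat.card (α ≃o α) : ℝ) ≤ ((Nat.factorial 22 * 22 : ℕ) : ℝ) *
        (Set.ncard {f : α → α | Monotone f} : ℝ) := by
      exact_mod_cast local_count X hX hinj
    rw [div_lt_iff₀ hε] at hm
    generalize (((Nat.factorial 22 * 22 : ℕ) : ℝ)) = c at *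
    have hmX' : (m : ℝ) ≤ X.card := by exact_mod_cast hmX
    have hG0 : (0 : ℝ) ≤ (Nat.card (α ≃o α) : ℝ) := by positivity
    have hm0 : (0 : ℝ) ≤ m := by positivity
    have h2 : (m : ℝ) * (Nat.card (α ≃o α) : ℝ) <
        m * (ε * (Set.ncard {f : α → α | Monotone f} : ℝ)) := by
      calc (m : ℝ) * (Nat.card (α ≃o α) : ℝ) ≤ X.card * (Nat.card (α ≃o α) : ℝ) := by gcongr
        _ ≤ c * (Set.ncard {f : α → α | Monotone f} : ℝ) := h1
        _ < (m * ε) * (Set.ncard {f : α → α | Monotone f} : ℝ) := by gcongr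
        _ = _ := by ring
    exact lt_of_mul_lt_mul_left h2 hm0
  · have hone : (1 : ℝ) ≤ (Nat.factorial 11 : ℝ) := by exact_mod_cast Nat.factorial_pos 11
    have h1 : (Nat.factorial 11 : ℝ) ^ X.card ≤ (Nat.factorial 11 : ℝ) ^ m :=
      pow_le_pow_right₀ hone hmX.le
    have h2 : L / ε < (40 / 39 : ℝ) ^ n :=
      hN.trans_le (pow_le_pow_right₀ (by norm_num) (by omega))
    rw [div_lt_iff₀ hε] at h2
    have h3 : (40 / 39 : ℝ) ^ n * (39 / 20 : ℝ) ^ n = 2 ^ (n - 11) * 2 ^ 11 := by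
      rw [← mul_pow, ← pow_add, Nat.sub_add_cancel (by omega)]
      norm_num
    have h4 : (Nat.factorial 11 : ℝ) ^ m * (39 / 20 : ℝ) ^ n < ε * 2 ^ (n - 11) := by
      have h5 : L * (39 / 20 : ℝ) ^ n < (40 / 39 : ℝ) ^ n * ε * (39 / 20 : ℝ) ^ n := by
        gcongr
      have h6 : (40 / 39 : ℝ) ^ n * ε * (39 / 20 : ℝ) ^ n = (ε * 2 ^ (n - 11)) * 2 ^ 11 := by
        rw [mul_right_comm, h3]
        ring
      rw [h6, hL, mul_right_comm] at h5
      exact lt_of_mul_lt_mul_right h5 (by positivity)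
    calc (Nat.card (α ≃o α) : ℝ) ≤ (Nat.factorial 11 : ℝ) ^ X.card * (39 / 20 : ℝ) ^ n := hG
      _ ≤ (Nat.factorial 11 : ℝ) ^ m * (39 / 20 : ℝ) ^ n := by gcongr
      _ < ε * 2 ^ (n - 11) := h4
      _ ≤ _ := by gcongr
end
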